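/- Let u : ℝⁿ → ℝ be continuous on the closed half-space {x ∈ ℝⁿ : xₙ ≥ 0} and twice continuously differentiable on the open half-space ℝⁿ₊, satisfying −Δu(x) = |∇u(x)|^p for every x ∈ ℝⁿ₊ and u(x̃, 0) = 0 for every x̃ ∈ ℝ^{n−1}. Then u depends only on the variable xₙ: for all x, y in the closed half-space with xₙ = yₙ one has u(x) = u(y). -/

import Mathlib

open Set Metric Filter RealInnerProductSpace

noncomputable section

/-- The Laplacian of `u : ℝⁿ → ℝ`, as the sum of the second derivatives
`∂²u/∂xᵢ²` (computed via iterated Fréchet derivatives). -/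
def lap {n : ℕ} (u : EuclideanSpace ℝ (Fin n) → ℝ) (x : EuclideanSpace ℝ (Fin n)) : ℝ :=
  ∑ i : Fin n, fderiv ℝ (fun y => fderiv ℝ u y (EuclideanSpace.single i (1 : ℝ))) x
    (EuclideanSpace.single i (1 : ℝ))

/-!
With `β = 1 / (p - 1)`, the function `w = -u` solves `Δw = ‖∇w‖ᵖ`. Because `p > 2`, the radial
function `|x - y| ^ (1 - β)`, made infinite on the unit sphere around `y`, is a strict supersolution
away from its centre when multiplied by a large constant, so `w` is `(1 - β)`-Hölder with a constant
independent of `w`. Doubling the variables with a concave modulus (the Ishii–Lions method) improves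
this to a universal interior gradient bound, and the scaling `R ^ (β - 1) w(R x)` turns it into
`‖∇w‖ ≤ G xₙ ^ (-β)` in the half-space.

For a tangential vector `h`, the difference `v = w(· + h) - w` is then small near `xₙ = 0`, where
`|w| ≤ C xₙ ^ (1 - β)`, and as `xₙ → ∞`, where `|v| ≤ G xₙ ^ (-β) ‖h‖`. In the slab between, `∇w` is
bounded and convexity of `t ↦ tᵖ` gives `Δv ≥ -B ‖∇v‖`, so the maximum principle yields `v ≤ 0`.
-/

open InnerProductSpace Laplacian Topology Module

section SecondOrder

variable {V : Type*} [NormedAddCommGroup V] [NormedSpace ℝ V]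

theorem deriv2_nonpos_of_isLocalMax {f f' : ℝ → ℝ} {f'' t : ℝ}
    (hf : ∀ᶠ s in 𝓝 t, HasDerivAt f (f' s) s) (hf' : HasDerivAt f' f'' t)
    (hmax : IsLocalMax f t) : f'' ≤ 0 := by
  by_contra! hpos
  have hderiv : deriv f =ᶠ[𝓝 t] f' := hf.mono fun s hs => hs.deriv
  have hderiv2 : deriv (deriv f) t = f'' := by rw [hderiv.deriv_eq, hf'.deriv]
  have hmin : IsLocalMin f t := isLocalMin_of_deriv_deriv_pos (by rwa [hderiv2])
    hmax.deriv_eq_zero hf.self_of_nhds.continuousAt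
  have hconst : f =ᶠ[𝓝 t] fun _ => f t := by
    filter_upwards [hmax, hmin] with s hs hs' using le_antisymm hs hs'
  have hzero : deriv (deriv f) t = 0 := by simp [hconst.deriv.deriv_eq]
  linarith

theorem eventually_differentiableAt {f : V → ℝ} {x : V} (hf : ContDiffAt ℝ 2 f x) :
    ∀ᶠ y in 𝓝 x, DifferentiableAt ℝ f y :=
  (hf.eventually (by simp)).mono fun _ hy => hy.differentiableAt (by simp)

theorem hasFDerivAt_fderiv {f : V → ℝ} {x : V} (hf : ContDiffAt ℝ 2 f x) :
    HasFDerivAt (fderiv ℝ f) (fderiv ℝ (fderiv ℝ f) x) x :=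
  ((hf.fderiv_right (m := 1) (by norm_num)).differentiableAt (by simp)).hasFDerivAt

theorem fderiv_fderiv_nonpos_of_isLocalMax {f : V → ℝ} {x : V} (hf : ContDiffAt ℝ 2 f x)
    (hmax : IsLocalMax f x) (v : V) : fderiv ℝ (fderiv ℝ f) x v v ≤ 0 := by
  have hline (t : ℝ) : HasDerivAt (fun t : ℝ => x + t • v) v t := by
    simpa using ((hasDerivAt_id t).smul_const v).const_add x
  have hcont : Tendsto (fun t : ℝ => x + t • v) (𝓝 0) (𝓝 x) := by
    simpa using (hline 0).continuousAt.tendsto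
  have hx : x + (0 : ℝ) • v = x := by simp
  refine deriv2_nonpos_of_isLocalMax (f := fun t : ℝ => f (x + t • v))
    (f' := fun t => fderiv ℝ f (x + t • v) v) (t := 0) ?_ ?_ ?_
  · filter_upwards [hcont.eventually (eventually_differentiableAt hf)] with t ht
    exact ht.hasFDerivAt.comp_hasDerivAt t (hline t)
  · have hsecond : HasDerivAt (fun t : ℝ => fderiv ℝ f (x + t • v)) (fderiv ℝ (fderiv ℝ f) x v) 0 :=
      (hasFDerivAt_fderiv hf).comp_hasDerivAt_of_eq 0 (hline 0) hx.symm
    simpa using hsecond.clm_apply (hasDerivAt_const 0 v)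
  · simpa only [IsLocalMax, IsMaxFilter, hx] using hcont.eventually hmax

theorem fderiv_fderiv_comp {F F' : ℝ → ℝ} {F'' : ℝ} {g : V → ℝ} {x : V}
    (hF : ∀ᶠ s in 𝓝 (g x), HasDerivAt F (F' s) s) (hF' : HasDerivAt F' F'' (g x))
    (hg : ContDiffAt ℝ 2 g x) (v : V) :
    fderiv ℝ (fderiv ℝ fun y => F (g y)) x v v =
      F'' * fderiv ℝ g x v ^ 2 + F' (g x) * fderiv ℝ (fderiv ℝ g) x v v := by
  have hfirst : (fderiv ℝ fun y => F (g y)) =ᶠ[𝓝 x] fun y => F' (g y) • fderiv ℝ g y := by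
    filter_upwards [hg.continuousAt.eventually hF, eventually_differentiableAt hg]
      with y hFy hgy
    exact (hFy.comp_hasFDerivAt y hgy.hasFDerivAt).fderiv
  have hgx := (hg.differentiableAt (by simp)).hasFDerivAt
  have hsecond : HasFDerivAt (fun y => F' (g y) • fderiv ℝ g y) _ x :=
    (hF'.comp_hasFDerivAt x hgx).smul (hasFDerivAt_fderiv hg)
  rw [hfirst.fderiv_eq, hsecond.fderiv]
  simp
  ring

theorem fderiv_comp_const_add_clm {W : Type*} [NormedAddCommGroup W] [NormedSpace ℝ W]
    {f : W → ℝ} {a : W} {L : V →L[ℝ] W} {x : V} (hf : DifferentiableAt ℝ f (a + L x)) :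
    fderiv ℝ (fun y => f (a + L y)) x = (fderiv ℝ f (a + L x)).comp L :=
  (hf.hasFDerivAt.comp x (L.hasFDerivAt.const_add a)).fderiv

theorem fderiv_fderiv_comp_const_add_clm {W : Type*} [NormedAddCommGroup W] [NormedSpace ℝ W]
    {f : W → ℝ} {a : W} {L : V →L[ℝ] W} {x : V} (hf : ContDiffAt ℝ 2 f (a + L x)) (v : V) :
    fderiv ℝ (fderiv ℝ fun y => f (a + L y)) x v v =
      fderiv ℝ (fderiv ℝ f) (a + L x) (L v) (L v) := by
  have haff : HasFDerivAt (fun y => a + L y) L x := L.hasFDerivAt.const_add a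
  have hfirst : (fderiv ℝ fun y => f (a + L y)) =ᶠ[𝓝 x] fun y => (fderiv ℝ f (a + L y)).comp L := by
    filter_upwards [haff.continuousAt.eventually (eventually_differentiableAt hf)]
      with y hy using fderiv_comp_const_add_clm hy
  have hsecond : HasFDerivAt (fun y => (fderiv ℝ f (a + L y)).comp L) _ x :=
    ((hasFDerivAt_fderiv hf).comp x haff).clm_comp (hasFDerivAt_const L x)
  rw [hfirst.fderiv_eq, hsecond.fderiv]
  simp

theorem norm_fderiv_comp {F : ℝ → ℝ} {F' : ℝ} {g : V → ℝ} {x : V} (hF : HasDerivAt F F' (g x))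
    (hg : DifferentiableAt ℝ g x) : ‖fderiv ℝ (fun y => F (g y)) x‖ = |F'| * ‖fderiv ℝ g x‖ := by
  have hcomp : HasFDerivAt (fun y => F (g y)) _ x := hF.comp_hasFDerivAt x hg.hasFDerivAt
  rw [hcomp.fderiv, norm_smul, Real.norm_eq_abs]

end SecondOrder

section Laplacian

variable {E : Type*} [NormedAddCommGroup E] [InnerProductSpace ℝ E]

theorem norm_fderiv_inner_left (e x : E) : ‖fderiv ℝ (fun y : E => inner ℝ e y) x‖ = ‖e‖ := by
  rw [show (fun y : E => inner ℝ e y) = innerSL ℝ e from rfl, (innerSL ℝ e).fderiv,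
    innerSL_apply_norm]

theorem fderiv_norm_sub_sq (x y : E) :
    fderiv ℝ (fun z => ‖z - y‖ ^ 2) x = (2 : ℝ) • innerSL ℝ (x - y) := by
  ext v
  have hsq : HasFDerivAt (fun z => ‖z - y‖ ^ 2) _ x := ((hasFDerivAt_id x).sub_const y).norm_sq
  rw [hsq.fderiv]
  simp

theorem norm_fderiv_norm_sub_sq (x y : E) :
    ‖fderiv ℝ (fun z => ‖z - y‖ ^ 2) x‖ = 2 * ‖x - y‖ := by
  rw [fderiv_norm_sub_sq, norm_smul, innerSL_apply_norm, Real.norm_ofNat]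

theorem contDiff_norm_sub_sq (y : E) {m : WithTop ℕ∞} :
    ContDiff ℝ m (fun z : E => ‖z - y‖ ^ 2) :=
  (contDiff_id.sub contDiff_const).norm_sq ℝ

variable [FiniteDimensional ℝ E]

theorem laplacian_eq_sum_fderiv_fderiv {ι : Type*} [Fintype ι] (b : OrthonormalBasis ι ℝ E)
    (f : E → ℝ) (x : E) : Δ f x = ∑ i, fderiv ℝ (fderiv ℝ f) x (b i) (b i) := by
  simp [laplacian_eq_iteratedFDeriv_orthonormalBasis f b, iteratedFDeriv_two_apply]

theorem laplacian_nonpos_of_isLocalMax {f : E → ℝ} {x : E} (hf : ContDiffAt ℝ 2 f x)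
    (hmax : IsLocalMax f x) : Δ f x ≤ 0 := by
  rw [laplacian_eq_sum_fderiv_fderiv (stdOrthonormalBasis ℝ E)]
  exact Finset.sum_nonpos fun i _ => fderiv_fderiv_nonpos_of_isLocalMax hf hmax _

theorem laplacian_fun_add {f g : E → ℝ} {x : E} (hf : ContDiffAt ℝ 2 f x)
    (hg : ContDiffAt ℝ 2 g x) : Δ (fun y => f y + g y) x = Δ f x + Δ g x :=
  hf.laplacian_add hg

theorem laplacian_fun_sub {f g : E → ℝ} {x : E} (hf : ContDiffAt ℝ 2 f x)
    (hg : ContDiffAt ℝ 2 g x) : Δ (fun y => f y - g y) x = Δ f x - Δ g x :=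
  hf.laplacian_sub hg

theorem laplacian_const_mul {f : E → ℝ} {x : E} (c : ℝ) (hf : ContDiffAt ℝ 2 f x) :
    Δ (fun y => c * f y) x = c * Δ f x :=
  laplacian_smul c hf

theorem fderiv_eq_and_laplacian_le_of_isLocalMax_sub {f g : E → ℝ} {x : E}
    (hf : ContDiffAt ℝ 2 f x) (hg : ContDiffAt ℝ 2 g x)
    (hmax : IsLocalMax (fun y => f y - g y) x) :
    fderiv ℝ f x = fderiv ℝ g x ∧ Δ f x ≤ Δ g x := by
  constructor
  · have hzero := hmax.fderiv_eq_zero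
    rwa [fderiv_fun_sub (hf.differentiableAt (by simp)) (hg.differentiableAt (by simp)),
      sub_eq_zero] at hzero
  · rw [← sub_nonpos, ← laplacian_fun_sub hf hg]
    exact laplacian_nonpos_of_isLocalMax (hf.sub hg) hmax

theorem sum_apply_sq_eq_norm_sq {ι : Type*} [Fintype ι] (b : OrthonormalBasis ι ℝ E)
    (L : E →L[ℝ] ℝ) : ∑ i, L (b i) ^ 2 = ‖L‖ ^ 2 := by
  obtain ⟨z, rfl⟩ := (toDual ℝ E).surjective L
  simp [b.sum_sq_inner_left]

theorem laplacian_comp {F F' : ℝ → ℝ} {F'' : ℝ} {g : E → ℝ} {x : E}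
    (hF : ∀ᶠ s in 𝓝 (g x), HasDerivAt F (F' s) s) (hF' : HasDerivAt F' F'' (g x))
    (hg : ContDiffAt ℝ 2 g x) :
    Δ (fun y => F (g y)) x = F'' * ‖fderiv ℝ g x‖ ^ 2 + F' (g x) * Δ g x := by
  let b := stdOrthonormalBasis ℝ E
  simp only [laplacian_eq_sum_fderiv_fderiv b, fderiv_fderiv_comp hF hF' hg,
    Finset.sum_add_distrib, ← Finset.mul_sum, sum_apply_sq_eq_norm_sq b]

theorem laplacian_comp_const_add_smul_isometry {f : E → ℝ} {a : E} {c : ℝ} {R : E ≃ₗᵢ[ℝ] E}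
    {x : E} (hf : ContDiffAt ℝ 2 f (a + c • R x)) :
    Δ (fun y => f (a + c • R y)) x = c ^ 2 * Δ f (a + c • R x) := by
  let b := stdOrthonormalBasis ℝ E
  let L : E →L[ℝ] E := c • (R.toContinuousLinearEquiv : E →L[ℝ] E)
  have hL : ∀ y, L y = c • R y := fun y => by simp [L]
  simp only [← hL] at hf ⊢
  rw [laplacian_eq_sum_fderiv_fderiv b, laplacian_eq_sum_fderiv_fderiv (b.map R), Finset.mul_sum]
  refine Finset.sum_congr rfl fun i _ => ?_
  rw [fderiv_fderiv_comp_const_add_clm hf]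
  simp [hL]
  ring

theorem laplacian_comp_const_add {f : E → ℝ} {a x : E} (hf : ContDiffAt ℝ 2 f (a + x)) :
    Δ (fun y => f (a + y)) x = Δ f (a + x) := by
  simpa using laplacian_comp_const_add_smul_isometry (c := 1) (R := .refl ℝ E) (a := a) (x := x)
    (by simpa using hf)

theorem laplacian_inner_left (e x : E) : Δ (fun y : E => inner ℝ e y) x = 0 := by
  have hfirst : fderiv ℝ (fun y : E => inner ℝ e y) = fun _ => innerSL ℝ e :=
    funext fun _ => (innerSL ℝ e).fderiv
  simp [laplacian_eq_sum_fderiv_fderiv (stdOrthonormalBasis ℝ E), hfirst]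

theorem laplacian_norm_sub_sq (x y : E) :
    Δ (fun z => ‖z - y‖ ^ 2) x = 2 * finrank ℝ E := by
  have hfirst : fderiv ℝ (fun z => ‖z - y‖ ^ 2) = fun z => (2 : ℝ) • innerSL ℝ (z - y) :=
    funext fun z => fderiv_norm_sub_sq z y
  have hsecond : HasFDerivAt (fun z => (2 : ℝ) • innerSL ℝ (z - y)) _ x :=
    (((innerSL ℝ).hasFDerivAt).comp x ((hasFDerivAt_id x).sub_const y)).const_smul (2 : ℝ)
  have hdiag (v : E) : fderiv ℝ (fderiv ℝ fun z => ‖z - y‖ ^ 2) x v v = 2 * ‖v‖ ^ 2 := by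
    rw [hfirst, hsecond.fderiv, ← real_inner_self_eq_norm_sq]
    rfl
  simp [laplacian_eq_sum_fderiv_fderiv (stdOrthonormalBasis ℝ E), hdiag, mul_comm]

theorem lap_eq_laplacian {n : ℕ} {u : EuclideanSpace ℝ (Fin n) → ℝ} {x : EuclideanSpace ℝ (Fin n)}
    (hu : ContDiffAt ℝ 2 u x) : lap u x = Δ u x := by
  have hcoord (v : EuclideanSpace ℝ (Fin n)) :
      fderiv ℝ (fun y => fderiv ℝ u y v) x = (fderiv ℝ (fderiv ℝ u) x).flip v := by
    simpa using ((hasFDerivAt_fderiv hu).clm_apply (hasFDerivAt_const v x)).fderiv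
  simp [lap, hcoord, laplacian_eq_sum_fderiv_fderiv (EuclideanSpace.basisFun (Fin n) ℝ)]

end Laplacian

section Power

theorem pos_of_mul_sub_one_eq_one {p β : ℝ} (hp : 1 < p) (hβ : β * (p - 1) = 1) : 0 < β :=
  pos_of_mul_pos_left (hβ ▸ one_pos) (by linarith)

theorem lt_one_of_mul_sub_one_eq_one {p β : ℝ} (hp : 2 < p) (hβ : β * (p - 1) = 1) : β < 1 := by
  nlinarith

theorem rpow_add_mul_sub_le_rpow {p a b : ℝ} (hp : 1 < p) (ha : 0 ≤ a) (hb : 0 ≤ b) :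
    a ^ p + p * a ^ (p - 1) * (b - a) ≤ b ^ p := by
  rcases ha.eq_or_lt with rfl | ha
  · rw [Real.zero_rpow (by linarith), Real.zero_rpow (by linarith)]
    simpa using Real.rpow_nonneg hb p
  have hbern : 1 + p * (b / a - 1) ≤ (b / a) ^ p := by
    simpa using one_add_mul_self_le_rpow_one_add (s := b / a - 1)
      (by linarith [div_nonneg hb ha.le]) hp.le
  calc a ^ p + p * a ^ (p - 1) * (b - a)
      = a ^ p * (1 + p * (b / a - 1)) := by rw [Real.rpow_sub_one ha.ne']; field_simp
    _ ≤ a ^ p * (b / a) ^ p := by gcongr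
    _ = b ^ p := by rw [← Real.mul_rpow ha.le (by positivity), mul_div_cancel₀ b ha.ne']

theorem neg_mul_norm_sub_le_norm_rpow_sub {X : Type*} [SeminormedAddCommGroup X] {p G : ℝ}
    {q r : X} (hp : 1 < p) (hq : ‖q‖ ≤ G) :
    -(p * G ^ (p - 1) * ‖r - q‖) ≤ ‖r‖ ^ p - ‖q‖ ^ p := by
  have htangent := rpow_add_mul_sub_le_rpow hp (norm_nonneg q) (norm_nonneg r)
  have hdist : ‖q‖ - ‖r‖ ≤ ‖r - q‖ := norm_sub_rev q r ▸ norm_sub_norm_le q r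
  have hslope : p * ‖q‖ ^ (p - 1) * (‖q‖ - ‖r‖) ≤ p * G ^ (p - 1) * ‖r - q‖ := by
    have hpow : ‖q‖ ^ (p - 1) ≤ G ^ (p - 1) := by gcongr
    calc p * ‖q‖ ^ (p - 1) * (‖q‖ - ‖r‖) ≤ p * ‖q‖ ^ (p - 1) * ‖r - q‖ := by gcongr
      _ ≤ p * G ^ (p - 1) * ‖r - q‖ := by gcongr
  linarith

end Power

section HolderBarrier

variable {E : Type*} [NormedAddCommGroup E] {x y : E} {p β B : ℝ}

/-- The function `‖x - y‖² / (1 - ‖x - y‖²)`, which blows up on the unit sphere around `y`; the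
barriers of the Hölder estimate are powers of it. -/
def blowup (y x : E) : ℝ := ‖x - y‖ ^ 2 / (1 - ‖x - y‖ ^ 2)

/-- The barrier `B / (1 - β) · g ^ ((1 - β) / 2)` with `g = blowup y`, a strict supersolution of
`Δs = ‖∇s‖ᵖ` off its centre `y` when `B` is large. -/
def holderBarrier (β B : ℝ) (y x : E) : ℝ := B / (1 - β) * blowup y x ^ ((1 - β) / 2)

theorem one_sub_norm_sq_pos (hx : ‖x - y‖ < 1) : 0 < 1 - ‖x - y‖ ^ 2 := by
  nlinarith [norm_nonneg (x - y)]

theorem blowup_pos (hxy : x ≠ y) (hx : ‖x - y‖ < 1) : 0 < blowup y x :=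
  div_pos (pow_pos (norm_sub_pos_iff.mpr hxy) 2) (one_sub_norm_sq_pos hx)

theorem one_add_blowup (hx : ‖x - y‖ < 1) : 1 + blowup y x = (1 - ‖x - y‖ ^ 2)⁻¹ := by
  have := (one_sub_norm_sq_pos hx).ne'
  rw [blowup]
  field_simp
  ring

theorem holderBarrier_self (hβ₁ : β < 1) (x : E) : holderBarrier β B x x = 0 := by
  simp [holderBarrier, blowup, Real.zero_rpow (show (1 - β) / 2 ≠ 0 by linarith)]

theorem holderBarrier_le (hβ₁ : β < 1) (hB : 0 ≤ B) (hx : ‖x - y‖ ≤ 1 / 2) :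
    holderBarrier β B y x ≤ B / (1 - β) * 2 ^ ((1 - β) / 2) * ‖x - y‖ ^ (1 - β) := by
  have : 0 < 1 - β := by linarith
  have hnorm := norm_nonneg (x - y)
  have hden := one_sub_norm_sq_pos (x := x) (y := y) (by linarith)
  have hblowup : blowup y x ≤ 2 * ‖x - y‖ ^ 2 := by
    rw [blowup, div_le_iff₀ hden]
    have hsq : ‖x - y‖ ^ 2 ≤ (1 / 2) ^ 2 := by gcongr
    nlinarith [sq_nonneg ‖x - y‖]
  calc holderBarrier β B y x ≤ B / (1 - β) * (2 * ‖x - y‖ ^ 2) ^ ((1 - β) / 2) := by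
        unfold holderBarrier
        have : 0 ≤ blowup y x := div_nonneg (by positivity) hden.le
        gcongr
    _ = B / (1 - β) * 2 ^ ((1 - β) / 2) * ‖x - y‖ ^ (1 - β) := by
        rw [Real.mul_rpow (by norm_num) (by positivity), ← Real.rpow_natCast_mul hnorm]
        push_cast
        ring_nf

theorem exists_le_holderBarrier (hβ₁ : β < 1) (hB : 0 < B) (M : ℝ) {r : ℝ} (hr : r < 1) :
    ∃ τ, r < τ ∧ τ < 1 ∧ ∀ x y : E, ‖x - y‖ = τ → M ≤ holderBarrier β B y x := by
  have hden : Tendsto (fun t : ℝ => 1 - t ^ 2) (𝓝[<] 1) (𝓝[>] 0) := by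
    refine tendsto_nhdsWithin_iff.mpr ⟨?_, ?_⟩
    · exact tendsto_nhdsWithin_of_tendsto_nhds (Continuous.tendsto' (by fun_prop) _ _ (by norm_num))
    · filter_upwards [self_mem_nhdsWithin, nhdsWithin_le_nhds (eventually_gt_nhds one_pos)]
        with t (ht : t < 1) ht₀
      change 0 < 1 - t ^ 2
      nlinarith
  have hsq : Tendsto (fun t : ℝ => t ^ 2) (𝓝[<] 1) (𝓝 1) :=
    tendsto_nhdsWithin_of_tendsto_nhds (Continuous.tendsto' (by fun_prop) _ _ (by norm_num))
  have htop : Tendsto (fun t : ℝ => B / (1 - β) * (t ^ 2 / (1 - t ^ 2)) ^ ((1 - β) / 2)) (𝓝[<] 1)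
      atTop :=
    ((tendsto_rpow_atTop (by linarith)).comp
      (hsq.pos_mul_atTop one_pos (tendsto_inv_nhdsGT_zero.comp hden))).const_mul_atTop
        (div_pos hB (by linarith))
  obtain ⟨τ, hM, hrτ, hτ⟩ := ((htop.eventually_ge_atTop M).and
    (((eventually_gt_nhds hr).filter_mono nhdsWithin_le_nhds).and
      eventually_mem_nhdsWithin)).exists
  exact ⟨τ, hrτ, hτ, fun x y hxy => by rwa [holderBarrier, blowup, hxy]⟩

theorem continuousAt_holderBarrier (hβ₁ : β < 1) (hx : ‖x - y‖ < 1) :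
    ContinuousAt (holderBarrier β B y) x := by
  have hblowup : ContinuousAt (blowup y) x :=
    ContinuousAt.div (by fun_prop) (by fun_prop) (one_sub_norm_sq_pos hx).ne'
  exact continuousAt_const.mul (hblowup.rpow_const (Or.inr (by linarith)))

theorem hasDerivAt_div_one_sub {t : ℝ} (ht : t ≠ 1) :
    HasDerivAt (fun t : ℝ => t / (1 - t)) ((1 - t)⁻¹ ^ 2) t := by
  have ht' : 1 - t ≠ 0 := sub_ne_zero.mpr ht.symm
  refine ((hasDerivAt_id t).div ((hasDerivAt_id t).const_sub 1) ht').congr_deriv ?_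
  simp only [id]
  field_simp
  ring

theorem hasDerivAt_inv_one_sub_sq {t : ℝ} (ht : t ≠ 1) :
    HasDerivAt (fun t : ℝ => (1 - t)⁻¹ ^ 2) (2 * (1 - t)⁻¹ ^ 3) t := by
  have ht' : 1 - t ≠ 0 := sub_ne_zero.mpr ht.symm
  refine ((((hasDerivAt_id t).const_sub 1).inv ht').pow 2).congr_deriv ?_
  simp only [id, Pi.inv_apply]
  push_cast
  field_simp

variable [InnerProductSpace ℝ E]

theorem contDiffAt_blowup (hx : ‖x - y‖ < 1) : ContDiffAt ℝ 2 (blowup y) x :=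
  (contDiff_norm_sub_sq y).contDiffAt.div
    (contDiff_const.sub (contDiff_norm_sub_sq y)).contDiffAt (one_sub_norm_sq_pos hx).ne'

theorem norm_fderiv_blowup_sq (hx : ‖x - y‖ < 1) :
    ‖fderiv ℝ (blowup y) x‖ ^ 2 = 4 * blowup y x * (1 + blowup y x) ^ 3 := by
  have hpos := one_sub_norm_sq_pos hx
  have hgrad : ‖fderiv ℝ (blowup y) x‖ = |(1 - ‖x - y‖ ^ 2)⁻¹ ^ 2| * (2 * ‖x - y‖) := by
    rw [← norm_fderiv_norm_sub_sq]
    exact norm_fderiv_comp (F := fun t => t / (1 - t)) (g := fun z => ‖z - y‖ ^ 2)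
      (hasDerivAt_div_one_sub (by linarith))
      ((contDiff_norm_sub_sq y (m := 1)).differentiable (by simp) x)
  rw [hgrad, one_add_blowup hx, blowup, mul_pow, sq_abs]
  field_simp
  ring

theorem hasDerivAt_barrierProfile {t : ℝ} (hβ : β < 1) (ht : 0 < t) :
    HasDerivAt (fun t : ℝ => B / (1 - β) * t ^ ((1 - β) / 2)) (B / 2 * t ^ (-(1 + β) / 2)) t := by
  refine ((Real.hasDerivAt_rpow_const (Or.inl ht.ne')).const_mul _).congr_deriv ?_
  have : 1 - β ≠ 0 := by linarith
  rw [show (1 - β) / 2 - 1 = -(1 + β) / 2 by ring]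
  field_simp

theorem contDiffAt_holderBarrier (hxy : x ≠ y) (hx : ‖x - y‖ < 1) :
    ContDiffAt ℝ 2 (holderBarrier β B y) x :=
  contDiffAt_const.mul ((contDiffAt_blowup hx).rpow_const_of_ne (blowup_pos hxy hx).ne')

theorem le_norm_fderiv_holderBarrier_rpow (hp : 2 < p) (hβ : β * (p - 1) = 1) (hB : 0 ≤ B)
    (hxy : x ≠ y) (hx : ‖x - y‖ < 1) :
    B ^ p * (blowup y x ^ (-(1 + β) / 2) * (1 + blowup y x) ^ 3) ≤
      ‖fderiv ℝ (holderBarrier β B y) x‖ ^ p := by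
  set g := blowup y x with hg
  have hgpos : 0 < g := blowup_pos hxy hx
  have hgradg : ‖fderiv ℝ (blowup y) x‖ = 2 * (g * (1 + g) ^ 3) ^ (1 / 2 : ℝ) := by
    rw [← Real.sqrt_eq_rpow, ← Real.sqrt_sq (norm_nonneg (fderiv ℝ (blowup y) x)),
      norm_fderiv_blowup_sq hx, ← hg, mul_assoc, Real.sqrt_mul (by norm_num)]
    norm_num
  have hgrad : ‖fderiv ℝ (holderBarrier β B y) x‖ =
      B * g ^ (-β / 2) * ((1 + g) ^ 3) ^ (1 / 2 : ℝ) := by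
    have hcomp : ‖fderiv ℝ (holderBarrier β B y) x‖ =
        |B / 2 * g ^ (-(1 + β) / 2)| * ‖fderiv ℝ (blowup y) x‖ :=
      norm_fderiv_comp (F := fun t => B / (1 - β) * t ^ ((1 - β) / 2)) (g := blowup y)
        (hasDerivAt_barrierProfile (lt_one_of_mul_sub_one_eq_one hp hβ) hgpos)
        ((contDiffAt_blowup hx).differentiableAt (by simp))
    rw [hcomp, hgradg, abs_of_nonneg (by positivity), Real.mul_rpow hgpos.le (by positivity),
      show -β / 2 = -(1 + β) / 2 + 1 / 2 by ring, Real.rpow_add hgpos]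
    ring
  have hbase : 1 ≤ (1 + g) ^ 3 := one_le_pow₀ (by linarith)
  calc B ^ p * (g ^ (-(1 + β) / 2) * (1 + g) ^ 3)
      ≤ B ^ p * (g ^ (-(1 + β) / 2) * ((1 + g) ^ 3) ^ (p / 2)) := by
        gcongr
        exact Real.self_le_rpow_of_one_le hbase (by linarith)
    _ = ‖fderiv ℝ (holderBarrier β B y) x‖ ^ p := by
        rw [hgrad, Real.mul_rpow (by positivity) (by positivity), Real.mul_rpow hB (by positivity),
          ← Real.rpow_mul hgpos.le, ← Real.rpow_mul (by positivity),
          show -β / 2 * p = -(1 + β) / 2 by linarith]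
        ring_nf

variable [FiniteDimensional ℝ E]

theorem laplacian_blowup (hx : ‖x - y‖ < 1) :
    Δ (blowup y) x = (1 + blowup y x) ^ 2 * (8 * blowup y x + 2 * finrank ℝ E) := by
  have hpos := one_sub_norm_sq_pos hx
  have hne : ‖x - y‖ ^ 2 ≠ 1 := by linarith
  have hcomp : Δ (blowup y) x = 2 * (1 - ‖x - y‖ ^ 2)⁻¹ ^ 3 * (2 * ‖x - y‖) ^ 2 +
      (1 - ‖x - y‖ ^ 2)⁻¹ ^ 2 * (2 * finrank ℝ E) := by
    rw [← laplacian_norm_sub_sq x y, ← norm_fderiv_norm_sub_sq]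
    exact laplacian_comp (F := fun t => t / (1 - t)) (g := fun z => ‖z - y‖ ^ 2)
      ((eventually_ne_nhds hne).mono fun t ht => hasDerivAt_div_one_sub ht)
      (hasDerivAt_inv_one_sub_sq hne) (contDiff_norm_sub_sq y).contDiffAt
  rw [hcomp, one_add_blowup hx, blowup]
  field_simp
  ring

theorem laplacian_holderBarrier_le (hB : 0 ≤ B) (hβ₀ : 0 ≤ β) (hβ₁ : β < 1) (hxy : x ≠ y)
    (hx : ‖x - y‖ < 1) :
    Δ (holderBarrier β B y) x ≤
      (4 + finrank ℝ E) * B * (blowup y x ^ (-(1 + β) / 2) * (1 + blowup y x) ^ 3) := by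
  set g := blowup y x with hg
  have hgpos : 0 < g := blowup_pos hxy hx
  have hcomp : Δ (holderBarrier β B y) x =
      B / 2 * (-(1 + β) / 2 * g ^ (-(1 + β) / 2 - 1)) * (4 * g * (1 + g) ^ 3) +
        B / 2 * g ^ (-(1 + β) / 2) * ((1 + g) ^ 2 * (8 * g + 2 * finrank ℝ E)) := by
    rw [hg, ← norm_fderiv_blowup_sq hx, ← laplacian_blowup hx]
    exact laplacian_comp (F := fun t => B / (1 - β) * t ^ ((1 - β) / 2)) (g := blowup y)
      ((eventually_gt_nhds hgpos).mono fun t ht => hasDerivAt_barrierProfile hβ₁ ht)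
      ((Real.hasDerivAt_rpow_const (Or.inl hgpos.ne')).const_mul _) (contDiffAt_blowup hx)
  have hconcave : B / 2 * (-(1 + β) / 2 * g ^ (-(1 + β) / 2 - 1)) * (4 * g * (1 + g) ^ 3) ≤ 0 := by
    have : 0 ≤ B * (1 + β) * g ^ (-(1 + β) / 2 - 1) * (g * (1 + g) ^ 3) := by positivity
    linarith
  have hlinear : (1 + g) ^ 2 * (8 * g + 2 * finrank ℝ E) ≤
      (8 + 2 * finrank ℝ E) * (1 + g) ^ 3 := by
    have : 8 * g + 2 * finrank ℝ E ≤ (8 + 2 * finrank ℝ E) * (1 + g) := by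
      nlinarith [(Nat.cast_nonneg (finrank ℝ E) : (0 : ℝ) ≤ _)]
    calc (1 + g) ^ 2 * (8 * g + 2 * finrank ℝ E)
        ≤ (1 + g) ^ 2 * ((8 + 2 * finrank ℝ E) * (1 + g)) := by gcongr
      _ = (8 + 2 * finrank ℝ E) * (1 + g) ^ 3 := by ring
  calc Δ (holderBarrier β B y) x
      ≤ B / 2 * g ^ (-(1 + β) / 2) * ((8 + 2 * finrank ℝ E) * (1 + g) ^ 3) := by
        rw [hcomp]
        linarith [mul_le_mul_of_nonneg_left hlinear
          (show 0 ≤ B / 2 * g ^ (-(1 + β) / 2) by positivity)]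
    _ = (4 + finrank ℝ E) * B * (g ^ (-(1 + β) / 2) * (1 + g) ^ 3) := by ring

theorem laplacian_holderBarrier_lt (hp : 2 < p) (hβ : β * (p - 1) = 1) (hB : 0 < B)
    (hB' : 4 + finrank ℝ E < B ^ (p - 1)) (hxy : x ≠ y) (hx : ‖x - y‖ < 1) :
    Δ (holderBarrier β B y) x < ‖fderiv ℝ (holderBarrier β B y) x‖ ^ p := by
  have hpos := blowup_pos hxy hx
  calc Δ (holderBarrier β B y) x
      ≤ (4 + finrank ℝ E) * B * (blowup y x ^ (-(1 + β) / 2) * (1 + blowup y x) ^ 3) :=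
        laplacian_holderBarrier_le hB.le (pos_of_mul_sub_one_eq_one (by linarith) hβ).le
          (lt_one_of_mul_sub_one_eq_one hp hβ) hxy hx
    _ < B ^ (p - 1) * B * (blowup y x ^ (-(1 + β) / 2) * (1 + blowup y x) ^ 3) := by gcongr
    _ = B ^ p * (blowup y x ^ (-(1 + β) / 2) * (1 + blowup y x) ^ 3) := by
        rw [Real.rpow_sub_one hB.ne', div_mul_cancel₀ _ hB.ne']
    _ ≤ ‖fderiv ℝ (holderBarrier β B y) x‖ ^ p :=
        le_norm_fderiv_holderBarrier_rpow hp hβ hB.le hxy hx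

end HolderBarrier

section HamiltonJacobi

variable {E : Type*} [NormedAddCommGroup E] [InnerProductSpace ℝ E] [FiniteDimensional ℝ E]
  {p β : ℝ} {w : E → ℝ}

/-- `w` is a classical solution of the viscous Hamilton–Jacobi equation `Δw = ‖∇w‖ᵖ` at every point
of `Ω`; this is the equation satisfied by the negative of a solution of `-Δu = ‖∇u‖ᵖ`. The gradient
is encoded by the Fréchet derivative, which has the same norm. -/
structure IsHJSolutionOn (p : ℝ) (w : E → ℝ) (Ω : Set E) : Prop where
  contDiffAt : ∀ x ∈ Ω, ContDiffAt ℝ 2 w x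
  laplacian_eq : ∀ x ∈ Ω, Δ w x = ‖fderiv ℝ w x‖ ^ p

namespace IsHJSolutionOn

theorem mono {Ω Ω' : Set E} (hw : IsHJSolutionOn p w Ω) (hΩ : Ω' ⊆ Ω) : IsHJSolutionOn p w Ω' :=
  ⟨fun x hx => hw.contDiffAt x (hΩ hx), fun x hx => hw.laplacian_eq x (hΩ hx)⟩

theorem differentiableAt {Ω : Set E} (hw : IsHJSolutionOn p w Ω) {x : E} (hx : x ∈ Ω) :
    DifferentiableAt ℝ w x :=
  (hw.contDiffAt x hx).differentiableAt (by simp)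

theorem continuousOn {Ω : Set E} (hw : IsHJSolutionOn p w Ω) : ContinuousOn w Ω :=
  fun x hx => (hw.contDiffAt x hx).continuousAt.continuousWithinAt

end IsHJSolutionOn

section HolderEstimate

theorem IsHJSolutionOn.sub_le_holderBarrier {x y : E} {B : ℝ} (hp : 2 < p)
    (hβ : β * (p - 1) = 1) (hB : 0 < B) (hB' : 4 + finrank ℝ E < B ^ (p - 1))
    (hw : IsHJSolutionOn p w (closedBall y 1)) (hx : ‖x - y‖ < 1) :
    w x - w y ≤ holderBarrier β B y x := by
  have hβ₁ := lt_one_of_mul_sub_one_eq_one hp hβ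
  obtain ⟨m, -, hm⟩ := (isCompact_closedBall y 1).exists_isMaxOn ⟨y, by simp⟩ hw.continuousOn
  obtain ⟨τ, hxτ, hτ₁, hτ⟩ := exists_le_holderBarrier (E := E) hβ₁ hB (w m - w y) hx
  have hball : closedBall y τ ⊆ closedBall y 1 := closedBall_subset_closedBall hτ₁.le
  have hcont : ContinuousOn (fun z => w z - holderBarrier β B y z) (closedBall y τ) := by
    refine (hw.continuousOn.mono hball).sub fun z hz => ?_
    exact (continuousAt_holderBarrier hβ₁ ((mem_closedBall_iff_norm.mp hz).trans_lt
      hτ₁)).continuousWithinAt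
  have hxmem : x ∈ closedBall y τ := mem_closedBall_iff_norm.mpr hxτ.le
  obtain ⟨z, hz, hzmax⟩ := (isCompact_closedBall y τ).exists_isMaxOn ⟨x, hxmem⟩ hcont
  have hle : w x - holderBarrier β B y x ≤ w z - holderBarrier β B y z := hzmax hxmem
  suffices w z - holderBarrier β B y z ≤ w y by linarith
  rcases (mem_closedBall_iff_norm.mp hz).eq_or_lt with hzτ | hzτ
  · linarith [hτ z y hzτ, show w z ≤ w m from hm (hball hz)]
  rcases eq_or_ne z y with rfl | hzy
  · simp [holderBarrier_self hβ₁]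
  have hlocal : IsLocalMax (fun z => w z - holderBarrier β B y z) z :=
    hzmax.isLocalMax (mem_of_superset (isOpen_ball.mem_nhds (mem_ball_iff_norm.mpr hzτ))
      ball_subset_closedBall)
  obtain ⟨hgrad, hlap⟩ := fderiv_eq_and_laplacian_le_of_isLocalMax_sub
    (hw.contDiffAt z (hball hz)) (contDiffAt_holderBarrier hzy (hzτ.trans hτ₁)) hlocal
  rw [hw.laplacian_eq z (hball hz), hgrad] at hlap
  exact absurd hlap (laplacian_holderBarrier_lt hp hβ hB hB' hzy (hzτ.trans hτ₁)).not_ge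

theorem exists_sub_le_rpow_norm_sub (E : Type*) [NormedAddCommGroup E] [InnerProductSpace ℝ E]
    [FiniteDimensional ℝ E] (hp : 2 < p) (hβ : β * (p - 1) = 1) :
    ∃ C > 0, ∀ (w : E → ℝ) (x y : E), IsHJSolutionOn p w (closedBall y 1) → ‖x - y‖ ≤ 1 / 2 →
      w x - w y ≤ C * ‖x - y‖ ^ (1 - β) := by
  let B : ℝ := (5 + finrank ℝ E) ^ β
  have hB : 0 < B := by positivity
  have hB' : 4 + finrank ℝ E < B ^ (p - 1) := by
    rw [← Real.rpow_mul (by positivity), hβ, Real.rpow_one]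
    linarith
  have hβ₁ := lt_one_of_mul_sub_one_eq_one hp hβ
  have : 0 < 1 - β := by linarith
  exact ⟨B / (1 - β) * 2 ^ ((1 - β) / 2), by positivity, fun w x y hw hx =>
    (hw.sub_le_holderBarrier hp hβ hB hB' (by linarith)).trans
      (holderBarrier_le hβ₁ hB.le hx)⟩

end HolderEstimate

section DoublingVariables

variable {V : Type*} [NormedAddCommGroup V] [InnerProductSpace ℝ V]

theorem sub_reflection_orthogonal_singleton {e : V} (he : ‖e‖ = 1) (z : V) :
    z - (ℝ ∙ e)ᗮ.reflection z = (2 * inner ℝ e z) • e := by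
  rw [Submodule.reflection_orthogonal_apply, Submodule.reflection_apply,
    Submodule.starProjection_unit_singleton ℝ he]
  module

theorem norm_add_sub_add_reflection {e x y : V} {r : ℝ} (he : ‖e‖ = 1) (hxy : x - y = r • e)
    (z : V) : ‖x + z - (y + (ℝ ∙ e)ᗮ.reflection z)‖ = |r + 2 * inner ℝ e z| := by
  rw [add_sub_add_comm, hxy, sub_reflection_orthogonal_singleton he, ← add_smul, norm_smul, he,
    mul_one, Real.norm_eq_abs]

theorem fderiv_eq_of_isLocalMax_doubling {f g : V → ℝ} {φ : ℝ → ℝ} {x y : V}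
    (hf : DifferentiableAt ℝ f x) (hg : DifferentiableAt ℝ g y)
    (hmax : IsLocalMax (fun q : V × V => f q.1 - g q.2 - φ ‖q.1 - q.2‖) (x, y)) :
    fderiv ℝ f x = fderiv ℝ g y := by
  have hshift : IsLocalMax (fun z : V => f (x + z) - g (y + z)) 0 := by
    have hcont : Tendsto (fun z : V => (x + z, y + z)) (𝓝 0) (𝓝 (x, y)) :=
      Continuous.tendsto' (by fun_prop) _ _ (by simp)
    filter_upwards [hcont.eventually hmax] with z hz
    simpa using hz
  have hzero := hshift.fderiv_eq_zero
  rwa [fderiv_fun_sub (by simpa [differentiableAt_comp_add_left] using hf)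
    (by simpa [differentiableAt_comp_add_left] using hg), fderiv_comp_add_left,
    fderiv_comp_add_left, add_zero, add_zero, sub_eq_zero] at hzero

theorem norm_fderiv_le_of_isLocalMax_doubling {f g : V → ℝ} {φ : ℝ → ℝ} {φ' : ℝ} {x y : V}
    (hxy : x ≠ y) (hg : DifferentiableAt ℝ g y) (hφ : HasDerivAt φ φ' ‖x - y‖)
    (hmax : IsLocalMax (fun q : V × V => f q.1 - g q.2 - φ ‖q.1 - q.2‖) (x, y)) :
    ‖fderiv ℝ g y‖ ≤ |φ'| := by
  have hnorm : DifferentiableAt ℝ (fun z => ‖x - z‖) y :=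
    ((differentiableAt_const x).sub differentiableAt_id).norm ℝ (sub_ne_zero.mpr hxy)
  have hmin : IsLocalMin (fun z => g z + φ ‖x - z‖) y := by
    have hcont : Tendsto (fun z : V => (x, z)) (𝓝 y) (𝓝 (x, y)) :=
      Continuous.tendsto' (by fun_prop) _ _ rfl
    filter_upwards [hcont.eventually hmax] with z hz
    linarith [hz]
  have hcomp : DifferentiableAt ℝ (fun z => φ ‖x - z‖) y :=
    hφ.differentiableAt.comp y hnorm
  have hzero := hmin.fderiv_eq_zero
  rw [fderiv_fun_add hg hcomp, add_eq_zero_iff_eq_neg] at hzero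
  have hlip : LipschitzWith 1 fun z => ‖x - z‖ := by
    exact funext (dist_eq_norm x) ▸ LipschitzWith.dist_right x
  rw [hzero, norm_neg, norm_fderiv_comp (g := fun z => ‖x - z‖) hφ hnorm]
  exact mul_le_of_le_one_right (abs_nonneg φ') (by simpa using norm_fderiv_le_of_lipschitz ℝ hlip)

theorem laplacian_comp_const_add_mul_inner {φ : ℝ → ℝ} {r : ℝ} {e : E} (he : ‖e‖ = 1)
    (hφ : ContDiffAt ℝ 2 φ r) :
    Δ (fun z : E => φ (r + 2 * inner ℝ e z)) 0 = 4 * deriv (deriv φ) r := by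
  have hline (t : ℝ) : HasDerivAt (fun t : ℝ => r + 2 * t) 2 t := by
    simpa using ((hasDerivAt_id t).const_mul 2).const_add r
  have hcont : Tendsto (fun t : ℝ => r + 2 * t) (𝓝 0) (𝓝 r) :=
    Continuous.tendsto' (by fun_prop) _ _ (by simp)
  have hφ' : HasDerivAt (deriv φ) (deriv (deriv φ) r) r :=
    ((hφ.derivWithin (m := 1) (by norm_num)).differentiableAt (by simp)).hasDerivAt
  have hF : ∀ᶠ t in 𝓝 (inner ℝ e (0 : E)),
      HasDerivAt (fun t => φ (r + 2 * t)) (deriv φ (r + 2 * t) * 2) t := by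
    rw [inner_zero_right]
    filter_upwards [hcont.eventually (eventually_differentiableAt hφ)] with t ht
    exact ht.hasDerivAt.comp t (hline t)
  have hF' : HasDerivAt (fun t => deriv φ (r + 2 * t) * 2) (deriv (deriv φ) r * 2 * 2)
      (inner ℝ e (0 : E)) :=
    (hφ'.comp_of_eq _ (hline _) (by simp)).mul_const 2
  rw [laplacian_comp (F := fun t => φ (r + 2 * t)) (g := fun z => inner ℝ e z) hF hF'
    (contDiff_const.inner ℝ contDiff_id).contDiffAt, norm_fderiv_inner_left, laplacian_inner_left,
    he]
  ring

theorem laplacian_sub_le_of_isLocalMax_doubling {f g : E → ℝ} {φ : ℝ → ℝ} {x y : E}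
    (hxy : x ≠ y) (hf : ContDiffAt ℝ 2 f x) (hg : ContDiffAt ℝ 2 g y)
    (hφ : ContDiffAt ℝ 2 φ ‖x - y‖)
    (hmax : IsLocalMax (fun q : E × E => f q.1 - g q.2 - φ ‖q.1 - q.2‖) (x, y)) :
    Δ f x - Δ g y ≤ 4 * deriv (deriv φ) ‖x - y‖ := by
  set r := ‖x - y‖
  have hr : 0 < r := norm_sub_pos_iff.mpr hxy
  let e : E := r⁻¹ • (x - y)
  have he : ‖e‖ = 1 := by simp [e, norm_smul, hr.ne', r]
  have hxye : x - y = r • e := (smul_inv_smul₀ hr.ne' _).symm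
  -- Displacing `y` by the mirror image of the displacement of `x` changes `‖x - y‖` only along `e`,
  -- at rate `2`, so the concavity of `φ` enters with the factor `4`.
  let R : E ≃ₗᵢ[ℝ] E := (ℝ ∙ e)ᗮ.reflection
  have hpos : ∀ᶠ z : E in 𝓝 0, 0 < r + 2 * inner ℝ e z := by
    have hcont : Tendsto (fun z : E => r + 2 * inner ℝ e z) (𝓝 0) (𝓝 r) :=
      Continuous.tendsto' (by fun_prop) _ _ (by simp)
    exact hcont.eventually_const_lt hr
  have hlocal : IsLocalMax (fun z => (f (x + z) - g (y + R z)) - φ (r + 2 * inner ℝ e z)) 0 := by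
    have hcont : Tendsto (fun z : E => (x + z, y + R z)) (𝓝 0) (𝓝 (x, y)) :=
      Continuous.tendsto' (by fun_prop) _ _ (by simp)
    filter_upwards [hcont.eventually hmax, hpos] with z hz hzpos
    simpa [R, norm_add_sub_add_reflection he hxye, abs_of_pos hzpos, r] using hz
  have hf0 : ContDiffAt ℝ 2 (fun z => f (x + z)) 0 :=
    ContDiffAt.comp 0 (by simpa using hf) (by fun_prop)
  have hg0 : ContDiffAt ℝ 2 (fun z => g (y + R z)) 0 :=
    ContDiffAt.comp 0 (by simpa using hg) (by fun_prop)
  have hφ0 : ContDiffAt ℝ 2 (fun z : E => φ (r + 2 * inner ℝ e z)) 0 :=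
    ContDiffAt.comp 0 (by simpa using hφ)
      (contDiff_const.add (contDiff_const.mul (contDiff_const.inner ℝ contDiff_id))).contDiffAt
  have hΔ := (fderiv_eq_and_laplacian_le_of_isLocalMax_sub (hf0.sub hg0) hφ0 hlocal).2
  have hfΔ : Δ (fun z => f (x + z)) 0 = Δ f x := by
    simpa using laplacian_comp_const_add (f := f) (a := x) (x := 0) (by simpa using hf)
  have hgΔ : Δ (fun z => g (y + R z)) 0 = Δ g y := by
    simpa using laplacian_comp_const_add_smul_isometry (c := 1) (R := R) (x := 0)
      (by simpa using hg)
  rwa [laplacian_fun_sub hf0 hg0, hfΔ, hgΔ, laplacian_comp_const_add_mul_inner he hφ] at hΔ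

end DoublingVariables

section GradientEstimate

/-- The concave modulus of continuity tested against `w x - w y` in the Ishii–Lions argument; it is
increasing on `[0, δ]`, with slope `2L` at the origin. -/
def doublingModulus (L δ r : ℝ) : ℝ := L * (2 * r - r ^ 2 / δ)

theorem hasDerivAt_doublingModulus (L δ r : ℝ) :
    HasDerivAt (doublingModulus L δ) (L * (2 - 2 * r / δ)) r := by
  have h := ((hasDerivAt_id r).const_mul 2).sub (((hasDerivAt_id r).pow 2).div_const δ)
  exact (h.const_mul L).congr_deriv (by simp)

theorem deriv_deriv_doublingModulus (L δ r : ℝ) :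
    deriv (deriv (doublingModulus L δ)) r = -2 * L / δ := by
  rw [funext fun r => (hasDerivAt_doublingModulus L δ r).deriv]
  have h := ((((hasDerivAt_id r).const_mul 2).div_const δ).const_sub 2).const_mul L
  exact (h.congr_deriv (by ring)).deriv

theorem mul_le_doublingModulus {L δ r : ℝ} (hL : 0 ≤ L) (hδ : 0 < δ) (hr : 0 ≤ r) (hrδ : r ≤ δ) :
    L * r ≤ doublingModulus L δ r := by
  have : r ^ 2 / δ ≤ r := by rw [div_le_iff₀ hδ]; nlinarith
  exact mul_le_mul_of_nonneg_left (by linarith) hL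

theorem doublingModulus_le {L δ r : ℝ} (hL : 0 ≤ L) (hδ : 0 < δ) :
    doublingModulus L δ r ≤ 2 * L * r := by
  have : 0 ≤ L * (r ^ 2 / δ) := by positivity
  unfold doublingModulus
  linarith

theorem fderiv_sub_mul_norm_sub_sq {V : Type*} [NormedAddCommGroup V] [InnerProductSpace ℝ V]
    {w : V → ℝ} {x x₀ : V} {C : ℝ} (hw : DifferentiableAt ℝ w x) :
    fderiv ℝ (fun z => w z - C * ‖z - x₀‖ ^ 2) x =
      fderiv ℝ w x - C • fderiv ℝ (fun z => ‖z - x₀‖ ^ 2) x :=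
  (hw.hasFDerivAt.sub (((contDiff_norm_sub_sq (m := 2) x₀).differentiable (by simp)
    x).hasFDerivAt.const_mul C)).fderiv

theorem laplacian_sub_mul_norm_sub_sq {x x₀ : E} {C : ℝ} (hw : ContDiffAt ℝ 2 w x) :
    Δ (fun z => w z - C * ‖z - x₀‖ ^ 2) x = Δ w x - C * (2 * finrank ℝ E) := by
  have hquad : ContDiffAt ℝ 2 (fun z => ‖z - x₀‖ ^ 2) x := (contDiff_norm_sub_sq x₀).contDiffAt
  rw [laplacian_fun_sub hw (contDiffAt_const.mul hquad), laplacian_const_mul C hquad,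
    laplacian_norm_sub_sq]

/-- The function whose positivity somewhere would contradict the modulus of continuity
`doublingModulus L δ` of `w` at `x₀`; the quadratic term localizes the first variable near `x₀`. -/
def doublingFunction (w : E → ℝ) (x₀ : E) (C L δ : ℝ) (q : E × E) : ℝ :=
  w q.1 - C * ‖q.1 - x₀‖ ^ 2 - w q.2 - doublingModulus L δ ‖q.1 - q.2‖

theorem not_isLocalMax_doublingFunction {x y x₀ : E} {C L δ : ℝ} (hp : 1 < p) (hC : 0 ≤ C)
    (hL : 0 ≤ L) (hδ : 0 < δ)
    (hsmall : p * (2 * L) ^ (p - 1) * (2 * C) + 2 * C * finrank ℝ E < 8 * L / δ)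
    (hw : IsHJSolutionOn p w {x, y}) (hxy : x ≠ y) (hxyδ : ‖x - y‖ ≤ δ) (hx : ‖x - x₀‖ ≤ 1) :
    ¬IsLocalMax (doublingFunction w x₀ C L δ) (x, y) := by
  intro hmax
  have hwx := hw.contDiffAt x (by simp)
  have hwy := hw.contDiffAt y (by simp)
  have hwx' := hw.differentiableAt (show x ∈ ({x, y} : Set E) by simp)
  have hwy' := hw.differentiableAt (show y ∈ ({x, y} : Set E) by simp)
  have hf : ContDiffAt ℝ 2 (fun z => w z - C * ‖z - x₀‖ ^ 2) x :=
    hwx.sub ((contDiff_norm_sub_sq x₀).const_smul C).contDiffAt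
  have hφ : ContDiff ℝ 2 (doublingModulus L δ) := by unfold doublingModulus; fun_prop
  have hgrad : ‖fderiv ℝ w x - fderiv ℝ w y‖ ≤ 2 * C := by
    rw [← fderiv_eq_of_isLocalMax_doubling (hf.differentiableAt (by simp)) hwy' hmax,
      fderiv_sub_mul_norm_sub_sq hwx', sub_sub_cancel, norm_smul, norm_fderiv_norm_sub_sq,
      Real.norm_of_nonneg hC]
    nlinarith
  have hslope : ‖fderiv ℝ w y‖ ≤ 2 * L := by
    have hratio : ‖x - y‖ / δ ≤ 1 := (div_le_one hδ).mpr hxyδ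
    have hratio₀ : 0 ≤ ‖x - y‖ / δ := by positivity
    refine (norm_fderiv_le_of_isLocalMax_doubling (f := fun z => w z - C * ‖z - x₀‖ ^ 2) hxy hwy'
      (hasDerivAt_doublingModulus L δ _) hmax).trans ?_
    rw [abs_of_nonneg (mul_nonneg hL (by linarith [mul_div_assoc 2 ‖x - y‖ δ]))]
    nlinarith [mul_div_assoc 2 ‖x - y‖ δ]
  have hupper : Δ w x - Δ w y ≤ 2 * C * finrank ℝ E - 8 * L / δ := by
    have h := laplacian_sub_le_of_isLocalMax_doubling hxy hf hwy hφ.contDiffAt hmax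
    rw [laplacian_sub_mul_norm_sub_sq hwx, deriv_deriv_doublingModulus] at h
    linarith [show 4 * (-2 * L / δ) = -(8 * L / δ) by ring]
  have hlower := neg_mul_norm_sub_le_norm_rpow_sub hp hslope (r := fderiv ℝ w x)
  rw [← hw.laplacian_eq x (by simp), ← hw.laplacian_eq y (by simp)] at hlower
  have : p * (2 * L) ^ (p - 1) * ‖fderiv ℝ w x - fderiv ℝ w y‖ ≤
    p * (2 * L) ^ (p - 1) * (2 * C) := by gcongr
  linarith

theorem doublingFunction_nonpos_of_boundary {X : Type*} [NormedAddCommGroup X] {w : X → ℝ}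
    {x y x₀ : X} {C L δ : ℝ} (hβ₁ : β < 1) (hC : 0 ≤ C)
    (hδ : 0 < δ) (hδ₁ : δ ≤ 1) (hL : L = C * δ ^ (-β))
    (hholder : w x - w y ≤ C * ‖x - y‖ ^ (1 - β)) (hxyδ : ‖x - y‖ ≤ δ)
    (hbdry : x = y ∨ ‖x - y‖ = δ ∨ ‖x - x₀‖ = 1) :
    doublingFunction w x₀ C L δ (x, y) ≤ 0 := by
  have hL₀ : 0 ≤ L := by rw [hL]; positivity
  have hmod := mul_le_doublingModulus hL₀ hδ (norm_nonneg (x - y)) hxyδ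
  have hLr : 0 ≤ L * ‖x - y‖ := by positivity
  have hpen : 0 ≤ C * ‖x - x₀‖ ^ 2 := by positivity
  simp only [doublingFunction]
  rcases hbdry with rfl | hr | hx
  · linarith
  · have : L * δ = C * δ ^ (1 - β) := by
      rw [hL, mul_assoc, ← Real.rpow_add_one hδ.ne', neg_add_eq_sub]
    rw [hr] at hholder hmod ⊢
    linarith
  · have hpow : ‖x - y‖ ^ (1 - β) ≤ 1 :=
      Real.rpow_le_one (norm_nonneg _) (hxyδ.trans hδ₁) (by linarith)
    rw [hx]
    nlinarith

theorem setOf_norm_sub_le_and_norm_sub_le_subset {X : Type*} [SeminormedAddCommGroup X] (x₀ : X)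
    (a b : ℝ) : {q : X × X | ‖q.1 - x₀‖ ≤ a ∧ ‖q.1 - q.2‖ ≤ b} ⊆
      closedBall x₀ a ×ˢ closedBall x₀ (a + b) := by
  rintro ⟨x, z⟩ ⟨hx : ‖x - x₀‖ ≤ a, hxz : ‖x - z‖ ≤ b⟩
  have hz : ‖z - x₀‖ ≤ ‖z - x‖ + ‖x - x₀‖ := norm_sub_le_norm_sub_add_norm_sub ..
  rw [norm_sub_rev z x] at hz
  exact ⟨mem_closedBall_iff_norm.mpr hx, mem_closedBall_iff_norm.mpr (by linarith)⟩

theorem isCompact_setOf_norm_sub_le_and_norm_sub_le {X : Type*} [SeminormedAddCommGroup X]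
    [ProperSpace X] (x₀ : X) (a b : ℝ) :
    IsCompact {q : X × X | ‖q.1 - x₀‖ ≤ a ∧ ‖q.1 - q.2‖ ≤ b} := by
  refine ((isCompact_closedBall x₀ a).prod (isCompact_closedBall x₀ (a + b))).of_isClosed_subset ?_
    (setOf_norm_sub_le_and_norm_sub_le_subset x₀ a b)
  exact (isClosed_le (f := fun q : X × X => ‖q.1 - x₀‖) (by fun_prop) continuous_const).inter
    (isClosed_le (f := fun q : X × X => ‖q.1 - q.2‖) (by fun_prop) continuous_const)

theorem sub_le_mul_norm_of_holder {x₀ y : E} {C L δ : ℝ} (hp : 1 < p) (hβ₁ : β < 1) (hC : 0 ≤ C)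
    (hδ : 0 < δ) (hδ₁ : δ ≤ 1) (hL : L = C * δ ^ (-β))
    (hsmall : p * (2 * L) ^ (p - 1) * (2 * C) + 2 * C * finrank ℝ E < 8 * L / δ)
    (hw : IsHJSolutionOn p w (closedBall x₀ 2))
    (hholder : ∀ x ∈ closedBall x₀ 1, ∀ y, ‖x - y‖ ≤ δ → w x - w y ≤ C * ‖x - y‖ ^ (1 - β))
    (hy : ‖x₀ - y‖ ≤ δ) : w x₀ - w y ≤ 2 * L * ‖x₀ - y‖ := by
  have hL₀ : 0 ≤ L := by rw [hL]; positivity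
  let D : Set (E × E) := {q | ‖q.1 - x₀‖ ≤ 1 ∧ ‖q.1 - q.2‖ ≤ δ}
  have hDsub : D ⊆ closedBall x₀ 2 ×ˢ closedBall x₀ 2 :=
    (setOf_norm_sub_le_and_norm_sub_le_subset x₀ 1 δ).trans
      (prod_mono (closedBall_subset_closedBall (by norm_num))
        (closedBall_subset_closedBall (by linarith)))
  have hcont : ContinuousOn (doublingFunction w x₀ C L δ) D := by
    have hfst := hw.continuousOn.comp continuousOn_fst fun q hq => (hDsub hq).1
    have hsnd := hw.continuousOn.comp continuousOn_snd fun q hq => (hDsub hq).2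
    unfold doublingFunction doublingModulus
    exact ((hfst.sub (by fun_prop)).sub hsnd).sub (by fun_prop)
  have hxyD : (x₀, y) ∈ D := ⟨by simp, hy⟩
  obtain ⟨⟨x, z⟩, hqD, hqmax⟩ :=
    (isCompact_setOf_norm_sub_le_and_norm_sub_le x₀ 1 δ).exists_isMaxOn ⟨_, hxyD⟩ hcont
  have hx : ‖x - x₀‖ ≤ 1 := hqD.1
  have hxz : ‖x - z‖ ≤ δ := hqD.2
  suffices doublingFunction w x₀ C L δ (x, z) ≤ 0 by
    have h : doublingFunction w x₀ C L δ (x₀, y) ≤ 0 := (hqmax hxyD).trans this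
    simp only [doublingFunction, sub_self, norm_zero] at h
    linarith [doublingModulus_le (r := ‖x₀ - y‖) hL₀ hδ]
  by_cases hbdry : x = z ∨ ‖x - z‖ = δ ∨ ‖x - x₀‖ = 1
  · exact doublingFunction_nonpos_of_boundary hβ₁ hC hδ hδ₁ hL
      (hholder x (mem_closedBall_iff_norm.mpr hx) z hxz) hxz hbdry
  push Not at hbdry
  obtain ⟨hne, hxzδ, hx₁⟩ := hbdry
  have hnhds : D ∈ 𝓝 (x, z) := by
    have h₁ : ∀ᶠ q : E × E in 𝓝 (x, z), ‖q.1 - x₀‖ < 1 :=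
      (isOpen_lt (by fun_prop) continuous_const).mem_nhds (hx.lt_of_ne hx₁)
    have h₂ : ∀ᶠ q : E × E in 𝓝 (x, z), ‖q.1 - q.2‖ < δ :=
      (isOpen_lt (by fun_prop) continuous_const).mem_nhds (hxz.lt_of_ne hxzδ)
    filter_upwards [h₁, h₂] with q hq₁ hq₂ using ⟨hq₁.le, hq₂.le⟩
  have hwxz : IsHJSolutionOn p w {x, z} := hw.mono (insert_subset (hDsub hqD).1
    (singleton_subset_iff.mpr (hDsub hqD).2))
  exact absurd (hqmax.isLocalMax hnhds)
    (not_isLocalMax_doublingFunction hp hC hL₀ hδ hsmall hwxz hne hxz hx)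

-- With `L = C δ^(-β)` the left side is of order `1/δ`, and the right one of order `δ^(-1-β)`.
theorem exists_doubling_parameters (d : ℝ) {C : ℝ} (hβ : β * (p - 1) = 1) (hβ₀ : 0 < β)
    (hC : 0 < C) : ∃ δ > 0, δ ≤ 1 / 2 ∧
      p * (2 * (C * δ ^ (-β))) ^ (p - 1) * (2 * C) + 2 * C * d < 8 * (C * δ ^ (-β)) / δ := by
  have hlarge := (tendsto_rpow_neg_nhdsGT_zero (neg_neg_of_pos hβ₀)).eventually_gt_atTop
    ((p * (2 * C) ^ (p - 1) * (2 * C) + 2 * C * |d|) / (8 * C))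
  have hsmall : ∀ᶠ δ : ℝ in 𝓝[>] 0, 0 < δ ∧ δ ≤ 1 / 2 := Ioc_mem_nhdsGT (by norm_num)
  obtain ⟨δ, hδlarge, hδ, hδ₁⟩ := (hlarge.and hsmall).exists
  refine ⟨δ, hδ, hδ₁, ?_⟩
  have hpow : (2 * (C * δ ^ (-β))) ^ (p - 1) = (2 * C) ^ (p - 1) / δ := by
    rw [← mul_assoc, Real.mul_rpow (by positivity) (by positivity), ← Real.rpow_mul hδ.le, neg_mul,
      hβ, Real.rpow_neg_one, div_eq_mul_inv]
  rw [div_lt_iff₀ (by positivity)] at hδlarge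
  rw [hpow, lt_div_iff₀ hδ]
  have hd : d * δ ≤ |d| := by nlinarith [le_abs_self d, abs_nonneg d]
  calc (p * ((2 * C) ^ (p - 1) / δ) * (2 * C) + 2 * C * d) * δ
      = p * (2 * C) ^ (p - 1) * (2 * C) + 2 * C * (d * δ) := by field_simp
    _ ≤ p * (2 * C) ^ (p - 1) * (2 * C) + 2 * C * |d| := by gcongr
    _ < 8 * (C * δ ^ (-β)) := by linarith

theorem exists_norm_fderiv_le (E : Type*) [NormedAddCommGroup E] [InnerProductSpace ℝ E]
    [FiniteDimensional ℝ E] (hp : 2 < p) (hβ : β * (p - 1) = 1) :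
    ∃ G > 0, ∀ (w : E → ℝ) (x : E), IsHJSolutionOn p w (closedBall x 4) → ‖fderiv ℝ w x‖ ≤ G := by
  obtain ⟨C, hC, hholder⟩ := exists_sub_le_rpow_norm_sub E hp hβ
  obtain ⟨δ, hδ, hδ₁, hsmall⟩ := exists_doubling_parameters (finrank ℝ E) hβ
    (pos_of_mul_sub_one_eq_one (by linarith) hβ) hC
  let G := 2 * (C * δ ^ (-β))
  have hG : 0 < G := by positivity
  have honeSided (w : E → ℝ) (x y : E) (hw : IsHJSolutionOn p w (closedBall x 3))
      (hy : ‖x - y‖ ≤ δ) : w x - w y ≤ G * ‖x - y‖ := by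
    refine sub_le_mul_norm_of_holder (by linarith) (lt_one_of_mul_sub_one_eq_one hp hβ) hC.le hδ
      (by linarith) rfl hsmall (hw.mono (closedBall_subset_closedBall (by norm_num)))
      (fun a ha b hb => ?_) hy
    have hbx : dist b x ≤ 2 := by
      linarith [dist_triangle b a x, dist_comm a b, dist_eq_norm a b, mem_closedBall.mp ha]
    exact hholder w a b (hw.mono (closedBall_subset_closedBall' (by linarith))) (hb.trans hδ₁)
  refine ⟨G, hG, fun w x hw => norm_fderiv_le_of_lip' ℝ hG.le ?_⟩
  filter_upwards [closedBall_mem_nhds x hδ] with y hy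
  rw [mem_closedBall, dist_eq_norm] at hy
  rw [Real.norm_eq_abs, abs_le]
  have hyx := honeSided w y x (hw.mono (closedBall_subset_closedBall'
    (by rw [dist_eq_norm]; linarith))) hy
  have hxy := honeSided w x y (hw.mono (closedBall_subset_closedBall (by norm_num)))
    (by rwa [norm_sub_rev])
  rw [norm_sub_rev] at hxy
  exact ⟨by linarith, hyx⟩

end GradientEstimate

section HalfSpaceDecay

variable {V : Type*} [NormedAddCommGroup V] {v : V → ℝ} {e : V} {G : ℝ}

theorem fderiv_mul_comp_smul [NormedSpace ℝ V] (c R : ℝ) (v : V → ℝ) (x : V) :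
    fderiv ℝ (fun z => c * v (R • z)) x = (c * R) • fderiv ℝ v (R • x) := by
  rw [mul_smul, ← fderiv_comp_smul]
  exact congrFun (fderiv_const_smul_field (f := fun z => v (R • z)) c) x

theorem IsHJSolutionOn.rescale {Ω : Set E} {R : ℝ} (hβ : β * (p - 1) = 1) (hR : 0 < R)
    (hw : IsHJSolutionOn p w Ω) :
    IsHJSolutionOn p (fun z => R ^ (β - 1) * w (R • z)) ((fun z => R • z) ⁻¹' Ω) := by
  have hcomp : ∀ x ∈ (fun z : E => R • z) ⁻¹' Ω, ContDiffAt ℝ 2 (fun z => w (R • z)) x :=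
    fun x hx => (hw.contDiffAt _ hx).comp x (by fun_prop)
  refine ⟨fun x hx => contDiffAt_const.mul (hcomp x hx), fun x hx => ?_⟩
  have hscale : Δ (fun z => w (R • z)) x = R ^ 2 * Δ w (R • x) := by
    simpa using laplacian_comp_const_add_smul_isometry (a := 0) (R := .refl ℝ E) (x := x)
      (by simpa using hw.contDiffAt _ hx)
  calc Δ (fun z => R ^ (β - 1) * w (R • z)) x
      = R ^ (β - 1) * (R ^ 2 * Δ w (R • x)) := by
        rw [laplacian_const_mul _ (hcomp x hx), hscale]
    _ = (R ^ β) ^ p * ‖fderiv ℝ w (R • x)‖ ^ p := by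
        rw [hw.laplacian_eq _ hx, ← mul_assoc, ← Real.rpow_add_natCast hR.ne',
          ← Real.rpow_mul hR.le]
        congr 2
        push_cast
        linear_combination -hβ
    _ = ‖fderiv ℝ (fun z => R ^ (β - 1) * w (R • z)) x‖ ^ p := by
        rw [fderiv_mul_comp_smul, ← Real.rpow_add_one hR.ne', sub_add_cancel, norm_smul,
          Real.norm_of_nonneg (by positivity), Real.mul_rpow (by positivity) (by positivity)]

theorem smul_mem_halfSpace_of_mem_closedBall [InnerProductSpace ℝ V] {R : ℝ} {x z : V}
    (he : ‖e‖ = 1) (hR : 0 < R) (hx : inner ℝ e x = 5 * R) (hz : z ∈ closedBall (R⁻¹ • x) 4) :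
    0 < inner ℝ e (R • z) := by
  have hcenter : inner ℝ e (R⁻¹ • x) = 5 := by
    rw [inner_smul_right, hx]
    field_simp
  have hdist : inner ℝ e (R⁻¹ • x - z) ≤ 4 := by
    refine (real_inner_le_norm e _).trans ?_
    rw [he, one_mul, norm_sub_rev]
    exact mem_closedBall_iff_norm.mp hz
  rw [inner_sub_right, hcenter] at hdist
  rw [inner_smul_right]
  exact mul_pos hR (by linarith)

theorem exists_norm_fderiv_le_rpow_inner (E : Type*) [NormedAddCommGroup E]
    [InnerProductSpace ℝ E] [FiniteDimensional ℝ E] (hp : 2 < p) (hβ : β * (p - 1) = 1) :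
    ∃ G > 0, ∀ (w : E → ℝ) (e : E), ‖e‖ = 1 → IsHJSolutionOn p w {x | 0 < inner ℝ e x} →
      ∀ x, 0 < inner ℝ e x → ‖fderiv ℝ w x‖ ≤ G * inner ℝ e x ^ (-β) := by
  obtain ⟨G, hG, hunit⟩ := exists_norm_fderiv_le E hp hβ
  refine ⟨G * 5 ^ β, by positivity, fun w e he hw x hx => ?_⟩
  obtain ⟨R, hR⟩ : ∃ R, inner ℝ e x = 5 * R := ⟨inner ℝ e x / 5, by ring⟩
  have hR₀ : 0 < R := by linarith
  have h := hunit _ (R⁻¹ • x) ((hw.rescale hβ hR₀).mono fun z hz =>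
    smul_mem_halfSpace_of_mem_closedBall he hR₀ hR hz)
  rw [fderiv_mul_comp_smul, ← Real.rpow_add_one hR₀.ne', sub_add_cancel, smul_inv_smul₀ hR₀.ne',
    norm_smul, Real.norm_of_nonneg (by positivity)] at h
  calc ‖fderiv ℝ w x‖ = R ^ β * ‖fderiv ℝ w x‖ * R ^ (-β) := by
        rw [mul_right_comm, ← Real.rpow_add hR₀, add_neg_cancel, Real.rpow_zero, one_mul]
    _ ≤ G * R ^ (-β) := by gcongr
    _ = G * 5 ^ β * inner ℝ e x ^ (-β) := by
        rw [hR, Real.mul_rpow (by norm_num) hR₀.le, mul_assoc, ← mul_assoc (5 ^ β),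
          ← Real.rpow_add (by norm_num), add_neg_cancel, Real.rpow_zero, one_mul]

theorem le_rpow_of_hasDerivAt_le {q q' : ℝ → ℝ} {t : ℝ} (hβ₁ : β < 1)
    (hq : ContinuousOn q (Ici 0)) (hq' : ∀ s, 0 < s → HasDerivAt q (q' s) s)
    (hle : ∀ s, 0 < s → q' s ≤ G * s ^ (-β)) (hq₀ : q 0 = 0) (ht : 0 ≤ t) :
    q t ≤ G / (1 - β) * t ^ (1 - β) := by
  have hβ : 0 < 1 - β := by linarith
  have hpow (s : ℝ) (hs : 0 < s) :
      HasDerivAt (fun s => G / (1 - β) * s ^ (1 - β)) (G * s ^ (-β)) s := by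
    refine ((Real.hasDerivAt_rpow_const (Or.inl hs.ne')).const_mul _).congr_deriv ?_
    rw [sub_sub_cancel_left, ← mul_assoc, div_mul_cancel₀ G hβ.ne']
  have hanti : AntitoneOn (fun s => q s - G / (1 - β) * s ^ (1 - β)) (Ici 0) := by
    refine antitoneOn_of_hasDerivWithinAt_nonpos (f' := fun s => q' s - G * s ^ (-β))
      (convex_Ici 0) ?_ ?_ ?_
    · exact hq.sub (continuousOn_const.mul
        (continuousOn_id.rpow_const fun _ _ => Or.inr hβ.le))
    · rw [interior_Ici]
      exact fun s hs => ((hq' s hs).sub (hpow s hs)).hasDerivWithinAt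
    · rw [interior_Ici]
      exact fun s hs => sub_nonpos.mpr (hle s hs)
  have h := hanti self_mem_Ici ht ht
  simp only [hq₀, Real.zero_rpow hβ.ne', mul_zero, sub_zero] at h
  linarith

theorem abs_le_rpow_inner_of_norm_fderiv_le [InnerProductSpace ℝ V] (he : ‖e‖ = 1)
    (hβ₁ : β < 1) (hcont : ContinuousOn v {x | 0 ≤ inner ℝ e x})
    (hdiff : ∀ x, 0 < inner ℝ e x → DifferentiableAt ℝ v x)
    (hzero : ∀ x, inner ℝ e x = 0 → v x = 0)
    (hgrad : ∀ x, 0 < inner ℝ e x → ‖fderiv ℝ v x‖ ≤ G * inner ℝ e x ^ (-β))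
    {x : V} (hx : 0 ≤ inner ℝ e x) :
    |v x| ≤ G / (1 - β) * inner ℝ e x ^ (1 - β) := by
  let γ (s : ℝ) : V := x + (s - inner ℝ e x) • e
  have hinner (s : ℝ) : inner ℝ e (γ s) = s := by
    simp [γ, inner_add_right, inner_smul_right, he]
  have hγ (s : ℝ) : HasDerivAt γ e s := by
    have h := (((hasDerivAt_id s).sub_const (inner ℝ e x)).smul_const e).const_add x
    exact h.congr_deriv (one_smul ℝ e)
  have hγx : γ (inner ℝ e x) = x := by simp [γ]
  have hq₀ : v (γ 0) = 0 := hzero _ (hinner 0)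
  have hq : ContinuousOn (fun s => v (γ s)) (Ici 0) :=
    hcont.comp (fun s _ => (hγ s).continuousAt.continuousWithinAt) fun s hs => by
      simpa [hinner] using hs
  have hq' (s : ℝ) (hs : 0 < s) : HasDerivAt (fun s => v (γ s)) (fderiv ℝ v (γ s) e) s :=
    (hdiff (γ s) (by rwa [hinner])).hasFDerivAt.comp_hasDerivAt s (hγ s)
  have hslope (s : ℝ) (hs : 0 < s) : |fderiv ℝ v (γ s) e| ≤ G * s ^ (-β) := by
    have h := hgrad (γ s) (by rwa [hinner])
    rw [hinner] at h
    simpa [he] using ((fderiv ℝ v (γ s)).le_opNorm e).trans (by simpa [he] using h)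
  have hupper := le_rpow_of_hasDerivAt_le hβ₁ hq hq'
    (fun s hs => (le_abs_self _).trans (hslope s hs)) hq₀ hx
  have hlower := le_rpow_of_hasDerivAt_le hβ₁ hq.neg (fun s hs => (hq' s hs).neg)
    (fun s hs => (neg_le_abs _).trans (hslope s hs)) (by simp [hq₀]) hx
  simp only [Pi.neg_apply, hγx] at hupper hlower
  exact abs_le.mpr ⟨by linarith, hupper⟩

end HalfSpaceDecay

section SlabMaximumPrinciple

variable {V : Type*} [NormedAddCommGroup V] {e : E} {a b l δ B M c : ℝ}

/-- The Japanese bracket `⟨x⟩ = √(1 + ‖x‖²)`, a smooth substitute for the norm. -/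
def bracket (x : V) : ℝ := √(1 + ‖x‖ ^ 2)

theorem one_le_bracket (x : V) : 1 ≤ bracket x :=
  Real.one_le_sqrt.mpr (by linarith [sq_nonneg ‖x‖])

theorem norm_le_bracket (x : V) : ‖x‖ ≤ bracket x :=
  Real.le_sqrt_of_sq_le (by linarith)

theorem contDiff_bracket [InnerProductSpace ℝ V] : ContDiff ℝ 2 (bracket : V → ℝ) :=
  (contDiff_const.add (contDiff_norm_sq ℝ)).sqrt fun x => by positivity

theorem hasDerivAt_sqrt_one_add {s : ℝ} (hs : -1 < s) :
    HasDerivAt (fun s => √(1 + s)) (2 * √(1 + s))⁻¹ s := by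
  have h := ((hasDerivAt_id s).const_add 1).sqrt (by simp only [id]; linarith)
  exact h.congr_deriv (one_div _)

theorem norm_fderiv_bracket_le [InnerProductSpace ℝ V] (x : V) :
    ‖fderiv ℝ (bracket : V → ℝ) x‖ ≤ 1 := by
  have hx := one_le_bracket x
  have h := norm_fderiv_comp (g := fun z => ‖z - 0‖ ^ 2) (hasDerivAt_sqrt_one_add
    (s := ‖x - 0‖ ^ 2) (by linarith [sq_nonneg ‖x - 0‖]))
    ((contDiff_norm_sub_sq (m := 2) 0).differentiable (by simp) x)
  rw [norm_fderiv_norm_sub_sq] at h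
  simp only [sub_zero] at h
  change ‖fderiv ℝ bracket x‖ = |(2 * bracket x)⁻¹| * (2 * ‖x‖) at h
  rw [h, abs_of_pos (by positivity), ← div_eq_inv_mul, mul_div_mul_left _ _ two_ne_zero]
  exact div_le_one_of_le₀ (norm_le_bracket x) (by linarith)

theorem laplacian_bracket_le (x : E) : Δ (bracket : E → ℝ) x ≤ finrank ℝ E := by
  have hx := one_le_bracket x
  have hs : (-1 : ℝ) < ‖x - 0‖ ^ 2 := by linarith [sq_nonneg ‖x - 0‖]
  have hF' := ((hasDerivAt_sqrt_one_add hs).const_mul 2).inv (by positivity)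
  have h := laplacian_comp (F := fun s => √(1 + s)) (F' := fun s => (2 * √(1 + s))⁻¹)
    (g := fun z => ‖z - 0‖ ^ 2) ((eventually_gt_nhds hs).mono fun s => hasDerivAt_sqrt_one_add) hF'
    (contDiff_norm_sub_sq 0).contDiffAt
  rw [laplacian_norm_sub_sq, norm_fderiv_norm_sub_sq] at h
  simp only [sub_zero] at h
  change Δ (bracket : E → ℝ) x = -(2 * (2 * bracket x)⁻¹) / (2 * bracket x) ^ 2 * (2 * ‖x‖) ^ 2 +
    (2 * bracket x)⁻¹ * (2 * finrank ℝ E) at h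
  have hconcave : -(2 * (2 * bracket x)⁻¹) / (2 * bracket x) ^ 2 * (2 * ‖x‖) ^ 2 ≤ 0 := by
    rw [neg_div, neg_mul]
    exact neg_nonpos.mpr (by positivity)
  have hslope : (2 * bracket x)⁻¹ * (2 * finrank ℝ E) ≤ finrank ℝ E := by
    rw [← div_eq_inv_mul, mul_div_mul_left _ _ two_ne_zero]
    exact div_le_self (by positivity) hx
  linarith

/-- The barrier of the maximum principle in the slab `a ≤ ⟪e, x⟫ ≤ b`: the exponential makes it a
strict supersolution of linear equations with bounded drift, the bracket makes it coercive. -/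
def slabBarrier [InnerProductSpace ℝ V] (e : V) (l a b δ : ℝ) (x : V) : ℝ :=
  Real.exp (l * (b - a)) - Real.exp (l * (inner ℝ e x - a)) + δ * bracket x

theorem contDiff_exp_mul_inner_sub [InnerProductSpace ℝ V] (e : V) (l a : ℝ) :
    ContDiff ℝ 2 fun x : V => Real.exp (l * (inner ℝ e x - a)) :=
  (contDiff_const.mul ((contDiff_const.inner ℝ contDiff_id).sub contDiff_const)).exp

theorem hasDerivAt_exp_mul_sub (l a t : ℝ) :
    HasDerivAt (fun t => Real.exp (l * (t - a))) (l * Real.exp (l * (t - a))) t :=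
  (((hasDerivAt_id t).sub_const a).const_mul l).exp.congr_deriv (by simp [mul_comm])

theorem norm_fderiv_exp_mul_inner_sub [InnerProductSpace ℝ V] {e : V} (he : ‖e‖ = 1)
    (hl : 0 ≤ l) (x : V) :
    ‖fderiv ℝ (fun x : V => Real.exp (l * (inner ℝ e x - a))) x‖ =
      l * Real.exp (l * (inner ℝ e x - a)) := by
  rw [norm_fderiv_comp (g := fun x => inner ℝ e x) (hasDerivAt_exp_mul_sub l a _)
    (innerSL ℝ e).differentiableAt,
    norm_fderiv_inner_left, he, mul_one, abs_of_nonneg (by positivity)]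

theorem laplacian_exp_mul_inner_sub (he : ‖e‖ = 1) (x : E) :
    Δ (fun x : E => Real.exp (l * (inner ℝ e x - a))) x =
      l ^ 2 * Real.exp (l * (inner ℝ e x - a)) := by
  rw [laplacian_comp (F := fun t => Real.exp (l * (t - a))) (g := fun x => inner ℝ e x)
    (.of_forall (hasDerivAt_exp_mul_sub l a)) ((hasDerivAt_exp_mul_sub l a _).const_mul l)
    (contDiff_const.inner ℝ contDiff_id).contDiffAt, norm_fderiv_inner_left, laplacian_inner_left,
    he]
  ring

theorem contDiff_slabBarrier [InnerProductSpace ℝ V] {e : V} :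
    ContDiff ℝ 2 (slabBarrier e l a b δ) :=
  (contDiff_const.sub (contDiff_exp_mul_inner_sub e l a)).add
    (contDiff_const.mul contDiff_bracket)

theorem mul_norm_le_slabBarrier [InnerProductSpace ℝ V] {e x : V} (hl : 0 ≤ l) (hδ : 0 ≤ δ)
    (hx : inner ℝ e x ≤ b) :
    δ * ‖x‖ ≤ slabBarrier e l a b δ x := by
  have hexp : Real.exp (l * (inner ℝ e x - a)) ≤ Real.exp (l * (b - a)) := by gcongr
  have hbracket : δ * ‖x‖ ≤ δ * bracket x := by gcongr; exact norm_le_bracket x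
  unfold slabBarrier
  linarith

theorem norm_fderiv_slabBarrier_le [InnerProductSpace ℝ V] {e : V} (he : ‖e‖ = 1) (hl : 0 ≤ l)
    (hδ : 0 ≤ δ) (x : V) :
    ‖fderiv ℝ (slabBarrier e l a b δ) x‖ ≤ l * Real.exp (l * (inner ℝ e x - a)) + δ := by
  have hexp := ((contDiff_exp_mul_inner_sub e l a).differentiable (by simp) x).hasFDerivAt
  have hbracket := ((contDiff_bracket (V := V)).differentiable (by simp) x).hasFDerivAt
  have hfderiv : HasFDerivAt (slabBarrier e l a b δ) _ x :=
    (hexp.const_sub (Real.exp (l * (b - a)))).add (hbracket.const_mul δ)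
  rw [hfderiv.fderiv]
  refine (norm_add_le _ _).trans (add_le_add ?_ ?_)
  · rw [norm_neg, norm_fderiv_exp_mul_inner_sub he hl]
  · rw [norm_smul, Real.norm_of_nonneg hδ]
    exact mul_le_of_le_one_right hδ (norm_fderiv_bracket_le x)

theorem laplacian_slabBarrier_le (he : ‖e‖ = 1) (hδ : 0 ≤ δ) (x : E) :
    Δ (slabBarrier e l a b δ) x ≤
      -(l ^ 2 * Real.exp (l * (inner ℝ e x - a))) + δ * finrank ℝ E := by
  have hexp := (contDiff_exp_mul_inner_sub e l a).contDiffAt (x := x)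
  have hbracket := (contDiff_bracket (V := E)).contDiffAt (x := x)
  have hconst : ContDiffAt ℝ 2 (fun _ : E => Real.exp (l * (b - a))) x := contDiffAt_const
  have hsum : Δ (slabBarrier e l a b δ) x = _ :=
    laplacian_fun_add (hconst.sub hexp) (contDiffAt_const.mul hbracket)
  rw [hsum, laplacian_fun_sub hconst hexp, laplacian_const_mul δ hbracket,
    laplacian_exp_mul_inner_sub he, laplacian_const, Pi.zero_apply, zero_sub]
  exact add_le_add_right (mul_le_mul_of_nonneg_left (laplacian_bracket_le x) hδ) _

theorem laplacian_slabBarrier_lt (he : ‖e‖ = 1) (hB : 0 ≤ B) (hδ : 0 ≤ δ)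
    (hsmall : δ * (finrank ℝ E + B) < 1) {x : E} (hx : a ≤ inner ℝ e x) :
    Δ (slabBarrier e (B + 1) a b δ) x < -(B * ‖fderiv ℝ (slabBarrier e (B + 1) a b δ) x‖) := by
  set X := Real.exp ((B + 1) * (inner ℝ e x - a))
  have hX : 1 ≤ X := Real.one_le_exp (mul_nonneg (by linarith) (by linarith))
  have hgrad : B * ‖fderiv ℝ (slabBarrier e (B + 1) a b δ) x‖ ≤ B * ((B + 1) * X + δ) := by
    gcongr
    exact norm_fderiv_slabBarrier_le he (by linarith) hδ x
  have hlap : Δ (slabBarrier e (B + 1) a b δ) x ≤ -((B + 1) ^ 2 * X) + δ * finrank ℝ E :=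
    laplacian_slabBarrier_le he hδ x
  nlinarith

theorem le_of_barrier {K U : Set E} {v S : E → ℝ} (hK : IsClosed K) (hU : IsOpen U) (hUK : U ⊆ K)
    (hv : ∀ x ∈ K, ContDiffAt ℝ 2 v x) (hΔv : ∀ x ∈ U, -(B * ‖fderiv ℝ v x‖) ≤ Δ v x)
    (hS : ContDiff ℝ 2 S) (hΔS : ∀ x ∈ U, Δ S x < -(B * ‖fderiv ℝ S x‖)) (hS₀ : ∀ x ∈ K, 0 ≤ S x)
    (hStop : Tendsto S (cocompact E ⊓ 𝓟 K) atTop) (hM : ∀ x ∈ K, v x ≤ M)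
    (hbdry : ∀ x ∈ K \ U, v x ≤ c) : ∀ x ∈ K, v x ≤ c := by
  have hperturbed (η : ℝ) (hη : 0 < η) (x : E) (hx : x ∈ K) : v x - η * S x ≤ c := by
    have hcont : ContinuousOn (fun x => v x - η * S x) K := fun x hx =>
      ((hv x hx).continuousAt.sub (continuousAt_const.mul
        hS.continuous.continuousAt)).continuousWithinAt
    have hfar : ∀ᶠ z in cocompact E ⊓ 𝓟 K, v z - η * S z ≤ v x - η * S x := by
      filter_upwards [(hStop.const_mul_atTop hη).eventually_ge_atTop (M - (v x - η * S x)),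
        mem_inf_of_right (mem_principal_self K)] with z hz hzK
      linarith [hM z hzK]
    obtain ⟨z, hz, hzmax⟩ := hcont.exists_isMaxOn' hK hx hfar
    refine (show v x - η * S x ≤ v z - η * S z from hzmax hx).trans ?_
    by_cases hzU : z ∈ U
    · have hηS : ContDiffAt ℝ 2 (fun x => η * S x) z := contDiffAt_const.mul hS.contDiffAt
      obtain ⟨hgrad, hlap⟩ := fderiv_eq_and_laplacian_le_of_isLocalMax_sub (hv z hz) hηS
        (hzmax.isLocalMax (mem_of_superset (hU.mem_nhds hzU) hUK))
      have hv' := hΔv z hzU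
      rw [hgrad, fderiv_const_mul (hS.differentiable (by simp) z), norm_smul,
        Real.norm_of_nonneg hη.le] at hv'
      rw [laplacian_const_mul η hS.contDiffAt] at hlap
      nlinarith [hΔS z hzU]
    · linarith [hbdry z ⟨hz, hzU⟩, mul_nonneg hη.le (hS₀ z hz)]
  intro x hx
  have hSx := hS₀ x hx
  refine le_of_forall_pos_le_add fun ε hε => ?_
  have h := hperturbed (ε / (S x + 1)) (by positivity) x hx
  have : ε / (S x + 1) * S x ≤ ε := by
    rw [div_mul_eq_mul_div]
    exact div_le_of_le_mul₀ (by positivity) hε.le (by gcongr; linarith)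
  linarith

theorem le_of_le_on_slab_boundary {v : E → ℝ} (he : ‖e‖ = 1) (hB : 0 ≤ B)
    (hv : ∀ x, inner ℝ e x ∈ Icc a b → ContDiffAt ℝ 2 v x)
    (hΔv : ∀ x, inner ℝ e x ∈ Ioo a b → -(B * ‖fderiv ℝ v x‖) ≤ Δ v x)
    (hM : ∀ x, inner ℝ e x ∈ Icc a b → v x ≤ M) (ha : ∀ x, inner ℝ e x = a → v x ≤ c)
    (hb : ∀ x, inner ℝ e x = b → v x ≤ c) {x : E} (hx : inner ℝ e x ∈ Icc a b) : v x ≤ c := by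
  have hinner : Continuous fun x : E => inner ℝ e x := by fun_prop
  let δ : ℝ := (finrank ℝ E + B + 1)⁻¹
  have hδ : 0 < δ := by positivity
  have hsmall : δ * (finrank ℝ E + B) < 1 := by
    rw [inv_mul_lt_iff₀ (by positivity)]
    linarith
  have hcoercive : ∀ x, inner ℝ e x ∈ Icc a b → δ * ‖x‖ ≤ slabBarrier e (B + 1) a b δ x :=
    fun x hx => mul_norm_le_slabBarrier (by linarith) hδ.le hx.2
  refine le_of_barrier (isClosed_Icc.preimage hinner) (isOpen_Ioo.preimage hinner)
    (preimage_mono Ioo_subset_Icc_self) hv hΔv contDiff_slabBarrier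
    (fun x hx => laplacian_slabBarrier_lt he hB hδ.le hsmall hx.1.le)
    (fun x hx => (by positivity : 0 ≤ δ * ‖x‖).trans (hcoercive x hx)) ?_ hM ?_ x hx
  · refine tendsto_atTop_mono' _ ?_
      ((tendsto_norm_cocompact_atTop.const_mul_atTop hδ).mono_left inf_le_left)
    exact mem_inf_of_right hcoercive
  · rintro x ⟨hxK, hxU⟩
    rcases eq_endpoints_or_mem_Ioo_of_mem_Icc hxK with h | h | h
    exacts [ha x h, hb x h, absurd h hxU]

end SlabMaximumPrinciple

section TangentialTranslation

variable {e h x : E} {G : ℝ}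

theorem IsHJSolutionOn.contDiffAt_translate_sub {Ω : Set E} (hw : IsHJSolutionOn p w Ω)
    (hx : x ∈ Ω) (hhx : h + x ∈ Ω) : ContDiffAt ℝ 2 (fun z => w (h + z) - w z) x :=
  ((hw.contDiffAt _ hhx).comp x (contDiffAt_const.add contDiffAt_id)).sub (hw.contDiffAt x hx)

theorem IsHJSolutionOn.neg_mul_norm_fderiv_le_laplacian_translate_sub {Ω : Set E} (hp : 1 < p)
    (hw : IsHJSolutionOn p w Ω) (hx : x ∈ Ω) (hhx : h + x ∈ Ω) (hG : ‖fderiv ℝ w x‖ ≤ G) :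
    -(p * G ^ (p - 1) * ‖fderiv ℝ (fun z => w (h + z) - w z) x‖) ≤
      Δ (fun z => w (h + z) - w z) x := by
  have hwh : ContDiffAt ℝ 2 (fun z => w (h + z)) x :=
    (hw.contDiffAt _ hhx).comp x (contDiffAt_const.add contDiffAt_id)
  rw [laplacian_fun_sub hwh (hw.contDiffAt x hx), laplacian_comp_const_add (hw.contDiffAt _ hhx),
    fderiv_fun_sub (hwh.differentiableAt (by simp)) (hw.differentiableAt hx), fderiv_comp_add_left,
    hw.laplacian_eq _ hhx, hw.laplacian_eq x hx]
  exact neg_mul_norm_sub_le_norm_rpow_sub hp hG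

theorem abs_translate_sub_le {V : Type*} [NormedAddCommGroup V] [InnerProductSpace ℝ V]
    {v : V → ℝ} {e h x : V} {s : ℝ} (hdiff : ∀ z, inner ℝ e z = s → DifferentiableAt ℝ v z)
    (hgrad : ∀ z, inner ℝ e z = s → ‖fderiv ℝ v z‖ ≤ G) (hh : inner ℝ e h = 0)
    (hx : inner ℝ e x = s) : |v (h + x) - v x| ≤ G * ‖h‖ := by
  have hconvex : Convex ℝ {z | inner ℝ e z = s} := convex_hyperplane (innerSL ℝ e).isLinear s
  have hhx : inner ℝ e (h + x) = s := by rw [inner_add_right, hh, zero_add, hx]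
  simpa only [add_sub_cancel_right, Real.norm_eq_abs] using
    hconvex.norm_image_sub_le_of_norm_fderiv_le hdiff hgrad hx hhx

theorem exists_mul_rpow_lt_of_pos {C s ε t : ℝ} (hs : 0 < s) (hε : 0 < ε) (ht : 0 < t) :
    ∃ a, 0 < a ∧ a < t ∧ C * a ^ s < ε := by
  have hzero : Tendsto (fun a : ℝ => C * a ^ s) (𝓝[>] 0) (𝓝 0) := by
    have h := (Real.continuousAt_rpow_const 0 s (Or.inr hs.le)).tendsto.const_mul C
    rw [Real.zero_rpow hs.ne', mul_zero] at h
    exact h.mono_left nhdsWithin_le_nhds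
  have hsmall : ∀ᶠ a in 𝓝[>] 0, C * a ^ s < ε := hzero.eventually (gt_mem_nhds hε)
  obtain ⟨a, hC, ha⟩ := (hsmall.and (Ioo_mem_nhdsGT ht)).exists
  exact ⟨a, ha.1, ha.2, hC⟩

theorem exists_mul_rpow_neg_lt {C s ε : ℝ} (hs : 0 < s) (hε : 0 < ε) (t : ℝ) :
    ∃ b, t < b ∧ C * b ^ (-s) < ε := by
  have hzero : Tendsto (fun b : ℝ => C * b ^ (-s)) atTop (𝓝 0) := by
    simpa using (tendsto_rpow_neg_atTop hs).const_mul C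
  exact ((eventually_gt_atTop t).and (hzero.eventually (gt_mem_nhds hε))).exists

theorem IsHJSolutionOn.translate_sub_le_of_le_on_slab_boundary {a b c : ℝ} (hp : 1 < p)
    (he : ‖e‖ = 1) (hw : IsHJSolutionOn p w {x | 0 < inner ℝ e x}) (hh : inner ℝ e h = 0)
    (ha₀ : 0 < a) (hG : ∀ z, a ≤ inner ℝ e z → ‖fderiv ℝ w z‖ ≤ G)
    (ha : ∀ z, inner ℝ e z = a → w (h + z) - w z ≤ c)
    (hb : ∀ z, inner ℝ e z = b → w (h + z) - w z ≤ c) (hx : inner ℝ e x ∈ Icc a b) :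
    w (h + x) - w x ≤ c := by
  have hG₀ : 0 ≤ G := (norm_nonneg _).trans (hG x hx.1)
  have hpos (z : E) (hz : a ≤ inner ℝ e z) : 0 < inner ℝ e z := ha₀.trans_le hz
  have hpos' (z : E) (hz : a ≤ inner ℝ e z) : 0 < inner ℝ e (h + z) := by
    rw [inner_add_right, hh, zero_add]
    exact hpos z hz
  refine le_of_le_on_slab_boundary (v := fun z => w (h + z) - w z) (B := p * G ^ (p - 1))
    (M := G * ‖h‖) he (by positivity) (fun z hz => ?_) (fun z hz => ?_) (fun z hz => ?_) ha hb hx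
  · exact hw.contDiffAt_translate_sub (hpos z hz.1) (hpos' z hz.1)
  · exact hw.neg_mul_norm_fderiv_le_laplacian_translate_sub hp (hpos z hz.1.le) (hpos' z hz.1.le)
      (hG z hz.1.le)
  · refine (le_abs_self _).trans (abs_translate_sub_le (s := inner ℝ e z) ?_ ?_ hh rfl)
    · exact fun y hy => hw.differentiableAt (hpos y (hy ▸ hz.1))
    · exact fun y hy => hG y (hy ▸ hz.1)

theorem IsHJSolutionOn.apply_add_le (hp : 2 < p) (he : ‖e‖ = 1)
    (hw : IsHJSolutionOn p w {x | 0 < inner ℝ e x}) (hcont : ContinuousOn w {x | 0 ≤ inner ℝ e x})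
    (hzero : ∀ x, inner ℝ e x = 0 → w x = 0) (hh : inner ℝ e h = 0) (hx : 0 < inner ℝ e x) :
    w (h + x) ≤ w x := by
  let β := (p - 1)⁻¹
  have hβ : β * (p - 1) = 1 := inv_mul_cancel₀ (by linarith)
  have hβ₀ : 0 < β := pos_of_mul_sub_one_eq_one (by linarith) hβ
  have hβ₁ : β < 1 := lt_one_of_mul_sub_one_eq_one hp hβ
  obtain ⟨G, hG, hdecay⟩ := exists_norm_fderiv_le_rpow_inner E hp hβ
  have hgrad := hdecay w e he hw
  have hdiff (z : E) (hz : 0 < inner ℝ e z) : DifferentiableAt ℝ w z := hw.differentiableAt hz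
  suffices ∀ ε > 0, w (h + x) - w x ≤ ε from sub_nonpos.mp (le_of_forall_pos_le_add (by simpa))
  intro ε hε
  obtain ⟨a, ha₀, hax, hasmall⟩ :=
    exists_mul_rpow_lt_of_pos (C := G / (1 - β)) (sub_pos.mpr hβ₁) (half_pos hε) hx
  obtain ⟨b, hxb, hbsmall⟩ := exists_mul_rpow_neg_lt (C := G * ‖h‖) hβ₀ hε (inner ℝ e x)
  refine hw.translate_sub_le_of_le_on_slab_boundary (G := G * a ^ (-β)) (by linarith) he hh ha₀
    (fun z hz => ?_) (fun z hz => ?_) (fun z hz => ?_) ⟨hax.le, hxb.le⟩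
  · refine (hgrad z (ha₀.trans_le hz)).trans (mul_le_mul_of_nonneg_left ?_ hG.le)
    exact Real.rpow_le_rpow_of_nonpos ha₀ hz (neg_nonpos.mpr hβ₀.le)
  · have hsmall (y : E) (hy : inner ℝ e y = a) : |w y| < ε / 2 := by
      have hy' := abs_le_rpow_inner_of_norm_fderiv_le he hβ₁ hcont hdiff hzero hgrad
        (hy ▸ ha₀.le)
      exact (hy ▸ hy').trans_lt hasmall
    have hhz := hsmall (h + z) (by rw [inner_add_right, hh, zero_add, hz])
    linarith [(abs_lt.mp hhz).2, (abs_lt.mp (hsmall z hz)).1]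
  · have hb₀ : 0 < b := hx.trans hxb
    have hshift := abs_translate_sub_le (fun y hy => hdiff y (hy ▸ hb₀))
      (fun y hy => hy ▸ hgrad y (hy ▸ hb₀)) hh hz
    rw [mul_right_comm] at hshift
    exact (le_abs_self _).trans (hshift.trans hbsmall.le)

end TangentialTranslation

theorem isOpen_setOf_inner_pos {V : Type*} [NormedAddCommGroup V] [InnerProductSpace ℝ V] (e : V) :
    IsOpen {x | 0 < inner ℝ e x} :=
  isOpen_lt continuous_const (innerSL ℝ e).continuous

theorem stmt0_general {u : E → ℝ} {e : E} (hp : 2 < p) (he : ‖e‖ = 1)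
    (hu_cont : ContinuousOn u {x | 0 ≤ inner ℝ e x})
    (hu_C2 : ContDiffOn ℝ 2 u {x | 0 < inner ℝ e x})
    (hPDE : ∀ x, 0 < inner ℝ e x → -Δ u x = ‖gradient u x‖ ^ p)
    (hbd : ∀ x, inner ℝ e x = 0 → u x = 0) {x y : E} (hx : 0 ≤ inner ℝ e x)
    (hxy : inner ℝ e x = inner ℝ e y) : u x = u y := by
  have hw : IsHJSolutionOn p (-u) {x | 0 < inner ℝ e x} :=
    { contDiffAt := fun x hx => (hu_C2.contDiffAt ((isOpen_setOf_inner_pos e).mem_nhds hx)).neg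
      laplacian_eq := fun x hx => by
        rw [laplacian_neg, Pi.neg_apply, hPDE x hx, fderiv_neg, norm_neg, gradient,
          LinearIsometryEquiv.norm_map] }
  have hle (x y : E) (hx : 0 < inner ℝ e x) (hxy : inner ℝ e x = inner ℝ e y) : u x ≤ u y := by
    have h := hw.apply_add_le (h := y - x) hp he hu_cont.neg (fun z hz => by simp [hbd z hz])
      (by rw [inner_sub_right, hxy, sub_self]) hx
    simpa using h
  rcases hx.eq_or_lt with hx | hx
  · rw [hbd x hx.symm, hbd y (hxy ▸ hx.symm)]
  · exact (hle x y hx hxy).antisymm (hle y x (hxy ▸ hx) hxy.symm)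

end HamiltonJacobi

theorem stmt0 {n : ℕ} (p : ℝ) (hp : 2 < p)
    (u : EuclideanSpace ℝ (Fin (n + 1)) → ℝ)
    (hu_cont : ContinuousOn u {x | 0 ≤ x (Fin.last n)})
    (hu_C2 : ContDiffOn ℝ 2 u {x | 0 < x (Fin.last n)})
    (hPDE : ∀ x : EuclideanSpace ℝ (Fin (n + 1)), 0 < x (Fin.last n) →
      -lap u x = ‖gradient u x‖ ^ p)
    (hbd : ∀ x : EuclideanSpace ℝ (Fin (n + 1)), x (Fin.last n) = 0 → u x = 0) :
    ∀ x y : EuclideanSpace ℝ (Fin (n + 1)), 0 ≤ x (Fin.last n) → 0 ≤ y (Fin.last n) →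
      x (Fin.last n) = y (Fin.last n) → u x = u y := by
  have he := isOpen_setOf_inner_pos (EuclideanSpace.single (Fin.last n) (1 : ℝ))
  have h := stmt0_general (u := u) (e := EuclideanSpace.single (Fin.last n) (1 : ℝ)) hp (by simp)
  simp only [EuclideanSpace.inner_single_left, map_one, one_mul] at he h
  exact fun x y hx _ hxy => h hu_cont hu_C2 (fun z hz =>
    lap_eq_laplacian (hu_C2.contDiffAt (he.mem_nhds hz)) ▸ hPDE z hz) hbd hx hxy
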